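/- arXiv:math/0611310 — 3 statements merged into one kernel-verified Lean document; each statement's English description precedes it below -/
import Mathlib

section
/- (uniform Bergelson's theorem for weakly mixing C*-dynamical systems) Let (A,ω,τ,G) be a weakly mixing C*-dynamical system with ω tracial, where G is a countable second countable topological group, Σ its Borel σ-algebra, μ the counting measure, and (g,h,j,k) ↦ ω(τ_h(a₁) τ_g(a₂) τ_{gh}(a₃) τ_{jk}(a₄) τ_j(a₅) τ_k(a₆)) is Σ² × Σ²-measurable for all a₁,...,a₆ ∈ A. Assume there exist uniform Følner sequences (Λ_{1,n}) and (Λ_{2,n}) in G satisfying the Tempel'man condition and such that (Λ_{1,n}⁻¹Λ_{1,n}) and (Λ_{2,n}⁻¹Λ_{2,n}) are also Følner in G. If (A,ω,τ,G) is uniformly asymptotically abelian with respect to (Λ_{1,n}), then lim_{n→∞} sup_{g₁,g₂ ∈ G} | (1/(μ(Λ_{1,n})μ(Λ_{2,n}))) Σ_{h ∈ Λ_{1,n}g₁} Σ_{g ∈ Λ_{2,n}g₂} ω(τ_{gh}(a) τ_g(b) τ_h(c) d) − ω(a)ω(b)ω(c)ω(d) | = 0 for all a, b, c, d ∈ A.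 -/
open MeasureTheory Filter Topology
open scoped Pointwise ComplexOrder

set_option maxHeartbeats 1000000

namespace BergelsonAux

/-- The GNS seminorm attached to a tracial state. -/
theorem exists_gns_seminorm
    {A : Type*} [NormedRing A] [StarRing A] [CStarRing A] [NormedAlgebra ℂ A]
    [CompleteSpace A] [StarModule ℂ A]
    (ω : A →ₗ[ℂ] ℂ) (hω_pos : ∀ a : A, 0 ≤ ω (star a * a)) (hω_one : ω 1 = 1) :
    ∃ p : Seminorm ℂ A, (∀ x, p x ^ 2 = (ω (star x * x)).re) ∧
      (∀ x y, ‖ω (star x * y)‖ ≤ p x * p y) ∧ (∀ x, p x ≤ ‖x‖) ∧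
      (∀ x y, ‖ω (star x * y)‖ = ‖ω (star y * x)‖) := by
  let : CStarAlgebra A := { }
  let := CStarAlgebra.spectralOrder A
  have := CStarAlgebra.spectralOrderedRing A
  have hpos : ∀ a : A, 0 ≤ a → 0 ≤ ω a := by
    intro a ha
    obtain ⟨b, rfl⟩ := CStarAlgebra.nonneg_iff_eq_star_mul_self.mp ha
    exact hω_pos b
  let f : A →ₚ[ℂ] ℂ := PositiveLinearMap.mk₀ ω hpos
  have hf : ∀ x, f x = ω x := fun x => rfl
  refine ⟨(normSeminorm ℂ f.PreGNS).comp f.toPreGNS.toLinearMap, ?_, ?_, ?_, ?_⟩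
  · intro x
    have := f.preGNS_norm_sq (f.toPreGNS x)
    simp only [Seminorm.comp_apply, coe_normSeminorm]
    have h2 := congrArg Complex.re this
    simpa [← Complex.ofReal_pow, hf] using h2
  · intro x y
    exact norm_inner_le_norm (𝕜 := ℂ) (f.toPreGNS x) (f.toPreGNS y)
  · intro x
    change ‖f.toPreGNS x‖ ≤ ‖x‖
    have h1 := f.preGNS_norm_def (f.toPreGNS x)
    rw [h1]
    simp only [PositiveLinearMap.ofPreGNS_toPreGNS]
    apply Real.sqrt_le_iff.mpr ⟨norm_nonneg _, ?_⟩
    have h2 : star x * x ≤ algebraMap ℝ A ‖star x * x‖ := IsSelfAdjoint.le_algebraMap_norm_self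
    have h3 := hpos _ (sub_nonneg.mpr h2)
    rw [map_sub] at h3
    have h4 : ω (algebraMap ℝ A ‖star x * x‖) = ((‖x‖ ^ 2 : ℝ) : ℂ) := by
      have : (algebraMap ℝ A ‖star x * x‖) = ((‖star x * x‖ : ℝ) : ℂ) • (1 : A) := by
        rw [Algebra.algebraMap_eq_smul_one]; simp
      rw [this, map_smul, hω_one, CStarRing.norm_star_mul_self]
      simp [sq]
    rw [h4] at h3
    have h5 := (Complex.le_def.mp h3).1
    simp only [Complex.sub_re, Complex.ofReal_re, Complex.zero_re] at h5
    rw [hf]; linarith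
  · intro x y
    exact norm_inner_symm (𝕜 := ℂ) (f.toPreGNS x) (f.toPreGNS y)

theorem norm_tau {A : Type*} [NormedRing A] [StarRing A] [CStarRing A] [NormedAlgebra ℂ A]
    [CompleteSpace A] [StarModule ℂ A] (t : A ≃⋆ₐ[ℂ] A) (x : A) : ‖t x‖ = ‖x‖ := by
  let : CStarAlgebra A := { }
  exact NonUnitalStarAlgHom.norm_map t t.injective x

/-- Set integrals of measurable functions against counting measure on a finite measurable set,
without assuming measurable singletons. -/
theorem setIntegral_count_eq {G E : Type*} [Countable G] [mG : MeasurableSpace G]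
    [NormedAddCommGroup E] [NormedSpace ℝ E] [CompleteSpace E]
    (f : G → E) (hf : StronglyMeasurable f)
    (S : Finset G) (hS : MeasurableSet (S : Set G)) :
    ∫ x in (S : Set G), f x ∂Measure.count = ∑ x ∈ S, f x := by
  have hm : mG ≤ (⊤ : MeasurableSpace G) := le_top
  have hc : (@Measure.count G mG) = (@Measure.count G ⊤).trim hm := by
    refine @Measure.ext G mG _ _ fun s hs => ?_
    rw [trim_measurableSet_eq hm hs, Measure.count_apply hs,
      @Measure.count_apply G ⊤ s MeasurableSpace.measurableSet_top]
  rw [hc, restrict_trim hm _ hS, ← integral_trim hm hf]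
  let : MeasurableSpace G := ⊤
  have : MeasurableSingletonClass G := ⟨fun _ => MeasurableSpace.measurableSet_top⟩
  rw [setIntegral_finset]
  · simp [Measure.real]
  · rw [← (S : Set G).biUnion_of_singleton]
    simp only [Finset.mem_coe]
    rw [integrableOn_finset_iUnion]
    intro i _
    exact integrableOn_singleton (by simp) (by rw [Measure.count_singleton]; exact ENNReal.one_lt_top)

theorem count_finset {G : Type*} [MeasurableSpace G] (S : Finset G)
    (hS : MeasurableSet (S : Set G)) : (Measure.count (S : Set G)).toReal = S.card := by
  rw [Measure.count_apply_finset' hS]; simp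

end BergelsonAux

namespace BergelsonAux

variable {A : Type*} [NormedRing A] [StarRing A] [NormedAlgebra ℂ A] {G : Type*} [CommGroup G]

/-- The facts about the system used in the combinatorial core. -/
structure Sys (ω : A →ₗ[ℂ] ℂ) (τ : G → A ≃⋆ₐ[ℂ] A) (p : Seminorm ℂ A) : Prop where
  sq : ∀ x, p x ^ 2 = (ω (star x * x)).re
  cs : ∀ x y, ‖ω (star x * y)‖ ≤ p x * p y
  le : ∀ x, p x ≤ ‖x‖
  symm : ∀ x y, ‖ω (star x * y)‖ = ‖ω (star y * x)‖
  norm_star : ∀ x : A, ‖star x‖ = ‖x‖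
  norm_map : ∀ g x, ‖τ g x‖ = ‖x‖
  mul : ∀ g h a, τ g (τ h a) = τ (g * h) a
  inv : ∀ g a, ω (τ g a) = ω a
  one : ω 1 = 1
  trace : ∀ a b : A, ω (a * b) = ω (b * a)
  seq : ∀ y, ω y = 0 → ∀ ε > (0 : ℝ), ∃ k : ℕ → G, ∀ i j, i < j →
    ‖ω (star (τ (k i) y) * τ (k j) y)‖ ≤ ε

variable {ω : A →ₗ[ℂ] ℂ} {τ : G → A ≃⋆ₐ[ℂ] A} {p : Seminorm ℂ A}

theorem Sys.pstar (H : Sys ω τ p) (x : A) : p (star x) = p x := by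
  have h := H.sq (star x)
  rw [star_star, H.trace, ← H.sq x] at h
  exact (sq_eq_sq₀ (apply_nonneg p _) (apply_nonneg p _)).mp h

theorem Sys.pinv (H : Sys ω τ p) (g : G) (x : A) : p (τ g x) = p x := by
  have h := H.sq (τ g x)
  rw [← map_star, ← map_mul, H.inv, ← H.sq x] at h
  exact (sq_eq_sq₀ (apply_nonneg p _) (apply_nonneg p _)).mp h

theorem Sys.cs' (H : Sys ω τ p) (x y : A) : ‖ω (x * y)‖ ≤ p x * ‖y‖ := by
  have := H.cs (star x) y
  rw [star_star, H.pstar] at this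
  exact this.trans (mul_le_mul_of_nonneg_left (H.le y) (apply_nonneg p _))

theorem Sys.norm_one_le (H : Sys ω τ p) : p 1 ≤ 1 := by
  have := H.sq 1
  simp [H.one] at this
  rcases this with h | h <;> linarith

theorem Sys.norm_le (H : Sys ω τ p) (x : A) : ‖ω x‖ ≤ ‖x‖ := by
  have := H.cs 1 x
  rw [star_one, one_mul] at this
  refine this.trans ?_
  have h1 := H.norm_one_le
  have h2 := H.le x
  have := apply_nonneg p x
  nlinarith [norm_nonneg x]

theorem p_sum_le {A : Type*} [NormedRing A] [NormedAlgebra ℂ A] {ι : Type*} (p : Seminorm ℂ A) (s : Finset ι) (f : ι → A) :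
    p (∑ i ∈ s, f i) ≤ ∑ i ∈ s, p (f i) := by
  classical
  induction s using Finset.induction_on with
  | empty => simp
  | insert a s ha ih =>
    rw [Finset.sum_insert ha, Finset.sum_insert ha]
    exact (map_add_le_add p _ _).trans (by linarith)

theorem Sys.sq_sum (H : Sys ω τ p) {ι : Type*} (s : Finset ι) (f : ι → A) :
    p (∑ i ∈ s, f i) ^ 2 = ∑ i ∈ s, ∑ j ∈ s, (ω (star (f i) * f j)).re := by
  rw [H.sq, star_sum, Finset.sum_mul_sum, map_sum, Complex.re_sum]
  refine Finset.sum_congr rfl fun i _ => ?_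
  rw [map_sum, Complex.re_sum]

/-- Double sums over a sequence with small off-diagonal terms. -/
theorem Sys.double_sum (H : Sys ω τ p) {y : A} {ε : ℝ} {k : ℕ → G}
    (hk : ∀ i j, i < j → ‖ω (star (τ (k i) y) * τ (k j) y)‖ ≤ ε) (N : ℕ) :
    ∑ i ∈ Finset.range N, ∑ j ∈ Finset.range N, ‖ω (star (τ (k i) y) * τ (k j) y)‖
      ≤ N * ‖y‖ ^ 2 + N ^ 2 * max ε 0 := by
  have h : ∀ i ∈ Finset.range N, ∀ j ∈ Finset.range N, ‖ω (star (τ (k i) y) * τ (k j) y)‖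
      ≤ (if i = j then ‖y‖ ^ 2 else 0) + max ε 0 := by
    intro i _ j _
    rcases lt_trichotomy i j with h | h | h
    · rw [if_neg h.ne, zero_add]
      exact (hk i j h).trans (le_max_left _ _)
    · subst h
      rw [if_pos rfl]
      have h1 := H.cs (τ (k i) y) (τ (k i) y)
      rw [H.pinv] at h1
      have h2 := H.le y
      have h3 := apply_nonneg p y
      have : p y * p y ≤ ‖y‖ ^ 2 := by nlinarith
      linarith [le_max_right ε 0]
    · rw [if_neg h.ne', zero_add, H.symm]
      exact (hk j i h).trans (le_max_left _ _)
  refine (Finset.sum_le_sum fun i hi => Finset.sum_le_sum (h i hi)).trans ?_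
  apply le_of_eq
  simp only [Finset.sum_add_distrib, Finset.sum_const, Finset.card_range, nsmul_eq_mul]
  have : ∑ i ∈ Finset.range N, ∑ j ∈ Finset.range N, (if i = j then ‖y‖ ^ 2 else 0)
      = N * ‖y‖ ^ 2 := by
    rw [Finset.sum_congr rfl (g := fun _ => ‖y‖ ^ 2)]
    · simp
    · intro i hi
      rw [Finset.sum_ite_eq, if_pos hi]
  rw [this]; ring

/-- Almost invariance. -/
theorem Sys.almost_inv [DecidableEq G] (H : Sys ω τ p) (S : Finset G) (x : A) (k : ℕ → G) (N : ℕ)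
    (δ : ℝ)
    (hδ : ∀ i < N, ((symmDiff S (S.image (· * k i))).card : ℝ) ≤ δ * S.card) :
    N * p (∑ g ∈ S, τ g x) ≤
      N * (δ * S.card * p x) + S.card * p (∑ i ∈ Finset.range N, τ (k i) x) := by
  have hshift : ∀ c : G, ∑ g ∈ S.image (· * c), τ g x = ∑ g ∈ S, τ g (τ c x) := by
    intro c
    rw [Finset.sum_image (fun a _ b _ h => mul_right_cancel h)]
    exact Finset.sum_congr rfl fun g _ => (H.mul g c x).symm
  have hdiff : ∀ i < N, p (∑ g ∈ S, τ g x - ∑ g ∈ S, τ g (τ (k i) x)) ≤ δ * S.card * p x := by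
    intro i hi
    rw [← hshift, ← Finset.sum_sdiff_sub_sum_sdiff]
    refine (map_sub_le_add p _ _).trans ?_
    have e : ∀ T : Finset G, p (∑ g ∈ T, τ g x) ≤ T.card * p x := fun T =>
      (p_sum_le p _ _).trans (by simp [H.pinv])
    refine (add_le_add (e _) (e _)).trans ?_
    have hc : ((symmDiff S (S.image (· * k i))).card : ℝ)
        = (S \ S.image (· * k i)).card + (S.image (· * k i) \ S).card := by
      rw [symmDiff_def, Finset.sup_eq_union, Finset.card_union_of_disjoint disjoint_sdiff_sdiff]
      push_cast; rfl
    have := hδ i hi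
    rw [hc] at this
    nlinarith [mul_le_mul_of_nonneg_right this (apply_nonneg p x)]
  have hid : (N : ℂ) • ∑ g ∈ S, τ g x =
      ∑ i ∈ Finset.range N, (∑ g ∈ S, τ g x - ∑ g ∈ S, τ g (τ (k i) x)) +
        ∑ g ∈ S, τ g (∑ i ∈ Finset.range N, τ (k i) x) := by
    rw [Finset.sum_sub_distrib, Finset.sum_const, Finset.card_range, Finset.sum_comm]
    simp only [map_sum]
    rw [sub_add_cancel, ← Nat.cast_smul_eq_nsmul ℂ]
  have h0 : (N : ℝ) * p (∑ g ∈ S, τ g x) = p ((N : ℂ) • ∑ g ∈ S, τ g x) := by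
    rw [map_smul_eq_mul]; simp
  rw [h0, hid]
  refine (map_add_le_add p _ _).trans (add_le_add ?_ ?_)
  · refine (p_sum_le p _ _).trans ?_
    refine (Finset.sum_le_sum fun i hi => hdiff i (Finset.mem_range.mp hi)).trans ?_
    simp
  · refine (p_sum_le p _ _).trans ?_
    simp only [H.pinv, Finset.sum_const, nsmul_eq_mul]
    exact le_rfl

/-- Følner sequences of finite sets. -/
structure Fol [DecidableEq G] (S : ℕ → Finset G) : Prop where
  ne : ∀ᶠ n in atTop, 0 < (S n).card
  inv : ∀ g : G, ∀ δ > (0 : ℝ), ∀ᶠ n in atTop,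
    ((symmDiff (S n) ((S n).image (· * g))).card : ℝ) ≤ δ * (S n).card

theorem Fol.inv_range [DecidableEq G] {S : ℕ → Finset G} (hS : Fol S) (k : ℕ → G) (N : ℕ)
    {δ : ℝ} (hδ : 0 < δ) : ∀ᶠ n in atTop, ∀ i < N,
      ((symmDiff (S n) ((S n).image (· * k i))).card : ℝ) ≤ δ * (S n).card := by
  have := (Finset.eventually_all (Finset.range N)).mpr (fun i _ => hS.inv (k i) δ hδ)
  simpa using this

/-- For a mean-zero element, some finite average of translates is small. -/
theorem Sys.exists_small (H : Sys ω τ p) {y : A} (hy : ω y = 0) {ε : ℝ} (hε : 0 < ε) :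
    ∃ (k : ℕ → G) (N : ℕ), 0 < N ∧
      ∑ i ∈ Finset.range N, ∑ j ∈ Finset.range N, ‖ω (star (τ (k i) y) * τ (k j) y)‖
        ≤ N ^ 2 * ε := by
  obtain ⟨k, hk⟩ := H.seq y hy (ε / 2) (by positivity)
  obtain ⟨N, hN⟩ := exists_nat_gt (‖y‖ ^ 2 / (ε / 2))
  have hN0 : (0 : ℝ) < N := lt_of_le_of_lt (by positivity) hN
  refine ⟨k, N, by exact_mod_cast hN0, ?_⟩
  refine (H.double_sum hk N).trans ?_
  rw [max_eq_left (by positivity)]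
  rw [div_lt_iff₀ (by positivity)] at hN
  nlinarith [mul_le_mul_of_nonneg_left hN.le hN0.le]

theorem Sys.erg0 [DecidableEq G] (H : Sys ω τ p) {S : ℕ → Finset G} (hS : Fol S) {y : A}
    (hy : ω y = 0) {ε : ℝ} (hε : 0 < ε) :
    ∀ᶠ n in atTop, p (∑ g ∈ S n, τ g y) ≤ ε * (S n).card := by
  obtain ⟨k, N, hN, hk⟩ := H.exists_small hy (ε := (ε / 2) ^ 2) (by positivity)
  have hδ : 0 < ε / 2 / (‖y‖ + 1) := by positivity
  filter_upwards [hS.inv_range k N hδ] with n hn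
  have h1 := H.almost_inv (S n) y k N _ hn
  have h2 : p (∑ i ∈ Finset.range N, τ (k i) y) ≤ N * (ε / 2) := by
    refine (sq_le_sq₀ (apply_nonneg p _) (by positivity)).mp ?_
    rw [H.sq_sum, mul_pow]
    refine le_trans (Finset.sum_le_sum fun i _ => Finset.sum_le_sum fun j _ => ?_) hk
    exact Complex.re_le_norm _
  have hN0 : (0 : ℝ) < N := by exact_mod_cast hN
  have h3 : ε / 2 / (‖y‖ + 1) * p y ≤ ε / 2 := by
    rw [div_mul_eq_mul_div, div_le_iff₀ (by positivity)]
    nlinarith [H.le y, norm_nonneg y]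
  have h4 : (N : ℝ) * (ε / 2 / (‖y‖ + 1) * (S n).card * p y) ≤ N * (ε / 2 * (S n).card) := by
    apply mul_le_mul_of_nonneg_left _ hN0.le
    nlinarith [mul_le_mul_of_nonneg_right h3 (Nat.cast_nonneg (α := ℝ) (S n).card)]
  have h5 := mul_le_mul_of_nonneg_left h2 (Nat.cast_nonneg (α := ℝ) (S n).card)
  have h6 : (N : ℝ) * p (∑ g ∈ S n, τ g y) ≤ N * (ε * (S n).card) := by
    refine h1.trans ((add_le_add h4 h5).trans (le_of_eq ?_))
    ring
  exact le_of_mul_le_mul_left h6 hN0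

/-- Uniform mean ergodic theorem. -/
theorem Sys.erg [DecidableEq G] (H : Sys ω τ p) {S : ℕ → Finset G} (hS : Fol S) (y : A)
    {ε : ℝ} (hε : 0 < ε) :
    ∀ᶠ n in atTop, ∀ g₁ : G,
      p (∑ g ∈ S n, τ (g * g₁) y - ((S n).card * ω y) • (1 : A)) ≤ ε * (S n).card := by
  have h0 : ω (y - ω y • (1 : A)) = 0 := by simp [H.one]
  filter_upwards [H.erg0 hS h0 hε] with n hn g₁
  rw [← H.pinv g₁] at hn
  convert hn using 2
  simp only [map_sum, map_sub, map_smul, map_one, Finset.sum_sub_distrib, Finset.sum_const, H.mul]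
  rw [← Nat.cast_smul_eq_nsmul ℂ, smul_smul, map_smul, map_one]
  simp only [mul_comm]

/-- Key estimate in the mean-zero case. -/
theorem Sys.key [DecidableEq G] (H : Sys ω τ p) {S1 S2 : ℕ → Finset G} (hS1 : Fol S1)
    (hS2 : Fol S2) {a : A} (ha : ω a = 0) (b : A) {ε : ℝ} (hε : 0 < ε) :
    ∀ᶠ n in atTop, ∀ g₁ : G,
      ∑ h ∈ S1 n, p (∑ g ∈ S2 n, τ g (τ (h * g₁) a * b)) ≤ ε * (S1 n).card * (S2 n).card := by
  set M : ℝ := (‖a‖ + 1) * (‖b‖ + 1) with hM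
  have hMpos : 0 < M := by positivity
  set B : ℝ := (‖b‖ + 1) ^ 2 with hB
  have hBpos : 0 < B := by positivity
  set η : ℝ := ε / 4 with hη
  have hηpos : 0 < η := by positivity
  set ε' : ℝ := η ^ 2 / (2 * B) with hε'
  have hε'pos : 0 < ε' := by positivity
  obtain ⟨k, N, hN, hk⟩ := H.exists_small ha hε'pos
  have hN0 : (0 : ℝ) < N := by exact_mod_cast hN
  have hδ : 0 < ε / 2 / M := by positivity
  set z : ℕ → ℕ → A := fun i j => star (τ (k i) a) * τ (k j) a with hz
  set w : ℕ → ℕ → A := fun i j => τ (k j) b * star (τ (k i) b) with hw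
  have hergall : ∀ᶠ n in atTop, ∀ i ∈ Finset.range N, ∀ j ∈ Finset.range N, ∀ g₁ : G,
      p (∑ g ∈ S1 n, τ (g * g₁) (z i j) - ((S1 n).card * ω (z i j)) • (1 : A))
        ≤ ε' * (S1 n).card := by
    refine (Finset.eventually_all _).mpr fun i _ => (Finset.eventually_all _).mpr fun j _ => ?_
    exact H.erg hS1 (z i j) hε'pos
  filter_upwards [hS2.inv_range k N hδ, hergall] with n hn2 hn1 g₁
  have hwn : ∀ i j, ‖w i j‖ ≤ B := by
    intro i j
    refine (norm_mul_le _ _).trans ?_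
    rw [H.norm_star, H.norm_map, H.norm_map, hB]
    nlinarith [norm_nonneg b]
  set s1 : ℝ := ((S1 n).card : ℝ) with hs1
  set s2 : ℝ := ((S2 n).card : ℝ) with hs2
  have hs1n : 0 ≤ s1 := Nat.cast_nonneg _
  have hs2n : 0 ≤ s2 := Nat.cast_nonneg _
  set x : G → A := fun h => τ (h * g₁) a * b with hx
  have hxM : ∀ h, p (x h) ≤ M := by
    intro h
    refine (H.le _).trans ((norm_mul_le _ _).trans ?_)
    rw [H.norm_map, hM]
    nlinarith [norm_nonneg a, norm_nonneg b]
  -- the square estimate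
  set P : G → ℝ := fun h => p (∑ i ∈ Finset.range N, τ (k i) (x h)) with hP
  have hterm : ∀ h i j, ω (star (τ (k i) (x h)) * τ (k j) (x h)) =
      ω (w i j * τ (h * g₁) (z i j)) := by
    intro h i j
    simp only [hx, hw, hz, map_mul, map_star, star_mul, H.mul]
    rw [mul_comm (h * g₁) (k i), mul_comm (h * g₁) (k j), ← mul_assoc _ _ (τ (k j) b), H.trace]
    simp only [mul_assoc]
  have hsq : ∑ h ∈ S1 n, P h ^ 2 ≤ s1 * (N ^ 2 * η ^ 2) := by
    have e1 : ∑ h ∈ S1 n, P h ^ 2 = ∑ i ∈ Finset.range N, ∑ j ∈ Finset.range N,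
        (ω (w i j * ∑ h ∈ S1 n, τ (h * g₁) (z i j))).re := by
      simp only [hP, H.sq_sum, hterm]
      rw [Finset.sum_comm]
      refine Finset.sum_congr rfl fun i _ => ?_
      rw [Finset.sum_comm]
      refine Finset.sum_congr rfl fun j _ => ?_
      rw [Finset.mul_sum, map_sum, Complex.re_sum]
    have e2 : ∀ i ∈ Finset.range N, ∀ j ∈ Finset.range N,
        (ω (w i j * ∑ h ∈ S1 n, τ (h * g₁) (z i j))).re ≤
          s1 * B * ‖ω (z i j)‖ + B * (ε' * s1) := by
      intro i hi j hj
      refine (Complex.re_le_norm _).trans ?_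
      set D := ∑ g ∈ S1 n, τ (g * g₁) (z i j) - ((S1 n).card * ω (z i j)) • (1 : A) with hD
      have hDe : ∑ h ∈ S1 n, τ (h * g₁) (z i j) = ((S1 n).card * ω (z i j)) • (1 : A) + D := by
        rw [hD]; abel
      rw [hDe, mul_add, map_add, mul_smul_comm, mul_one, map_smul, smul_eq_mul]
      refine (norm_add_le _ _).trans (add_le_add ?_ ?_)
      · rw [norm_mul, norm_mul]
        have h1 := (H.norm_le (w i j)).trans (hwn i j)
        have h2 : ‖((S1 n).card : ℂ)‖ = s1 := Complex.norm_natCast _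
        rw [h2]
        have h3 : 0 ≤ s1 * ‖ω (z i j)‖ := mul_nonneg hs1n (norm_nonneg _)
        nlinarith [mul_le_mul_of_nonneg_left h1 h3]
      · rw [H.trace]
        have h1 := H.cs' D (w i j)
        have h2 := hn1 i hi j hj g₁
        have h3 : p D * ‖w i j‖ ≤ (ε' * s1) * B :=
          mul_le_mul h2 (hwn i j) (norm_nonneg _) (mul_nonneg hε'pos.le hs1n)
        linarith
    rw [e1]
    refine (Finset.sum_le_sum fun i hi => Finset.sum_le_sum (e2 i hi)).trans ?_
    have h5 : ∑ i ∈ Finset.range N, ∑ j ∈ Finset.range N,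
        (s1 * B * ‖ω (z i j)‖ + B * (ε' * s1)) =
        s1 * B * ∑ i ∈ Finset.range N, ∑ j ∈ Finset.range N, ‖ω (z i j)‖ +
          N * (N * (B * (ε' * s1))) := by
      simp only [Finset.sum_add_distrib, ← Finset.mul_sum]
      simp only [Finset.sum_const, Finset.card_range, nsmul_eq_mul]
      ring
    rw [h5]
    have h1 := mul_le_mul_of_nonneg_left hk (show 0 ≤ s1 * B by positivity)
    have h2 : B * ε' = η ^ 2 / 2 := by rw [hε']; field_simp
    have h3 : s1 * B * (N ^ 2 * ε') = s1 * N ^ 2 * (η ^ 2 / 2) := by rw [← h2]; ring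
    have h4 : (N : ℝ) * (N * (B * (ε' * s1))) = s1 * N ^ 2 * (η ^ 2 / 2) := by rw [← h2]; ring
    rw [h4]
    rw [h3] at h1
    linarith
  have hsum : ∑ h ∈ S1 n, P h ≤ s1 * (N * (2 * η)) := by
    have e : ∀ h, P h ≤ N * η + P h ^ 2 / (N * η) := by
      intro h
      have hpos : 0 < N * η := by positivity
      have hPn : 0 ≤ P h := apply_nonneg p _
      rw [← sub_nonneg]
      have : N * η + P h ^ 2 / (N * η) - P h =
        ((N * η - P h) ^ 2 + N * η * P h) / (N * η) := by field_simp; ring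
      rw [this]
      positivity
    refine (Finset.sum_le_sum fun h _ => e h).trans ?_
    rw [Finset.sum_add_distrib, ← Finset.sum_div, Finset.sum_const, nsmul_eq_mul]
    have : (∑ h ∈ S1 n, P h ^ 2) / (N * η) ≤ s1 * (N * η) := by
      rw [div_le_iff₀ (by positivity)]
      refine hsq.trans (le_of_eq ?_)
      ring
    linarith
  -- conclusion
  have hfin : N * ∑ h ∈ S1 n, p (∑ g ∈ S2 n, τ g (x h)) ≤ N * (ε * s1 * s2) := by
    rw [Finset.mul_sum]
    have e : ∀ h ∈ S1 n, N * p (∑ g ∈ S2 n, τ g (x h)) ≤ N * (ε / 2 * s2) + s2 * P h := by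
      intro h _
      refine (H.almost_inv (S2 n) (x h) k N _ hn2).trans ?_
      have h1 : ε / 2 / M * p (x h) ≤ ε / 2 := by
        rw [div_mul_eq_mul_div, div_le_iff₀ hMpos]
        nlinarith [hxM h]
      have h2 : ε / 2 / M * s2 * p (x h) ≤ ε / 2 * s2 := by
        nlinarith [mul_le_mul_of_nonneg_right h1 hs2n]
      have h3 := mul_le_mul_of_nonneg_left h2 hN0.le
      linarith
    refine (Finset.sum_le_sum e).trans ?_
    rw [Finset.sum_add_distrib, ← Finset.mul_sum (S1 n) P s2, Finset.sum_const, nsmul_eq_mul]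
    have h1 := mul_le_mul_of_nonneg_left hsum hs2n
    have h2 : s2 * (s1 * (N * (2 * η))) = N * (ε / 2 * s1 * s2) := by rw [hη]; ring
    rw [h2] at h1
    have h3 : s1 * (N * (ε / 2 * s2)) = N * (ε / 2 * s1 * s2) := by ring
    linarith
  exact le_of_mul_le_mul_left hfin hN0

/-- The combinatorial core of the theorem. -/
theorem Sys.main [DecidableEq G] (H : Sys ω τ p) {S1 S2 : ℕ → Finset G} (hS1 : Fol S1)
    (hS2 : Fol S2) (a b c d : A) {ε : ℝ} (hε : 0 < ε) :
    ∀ᶠ n in atTop, ∀ g₁ g₂ : G,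
      ‖∑ h ∈ S1 n, ∑ g ∈ S2 n,
          ω (τ ((g * g₂) * (h * g₁)) a * τ (g * g₂) b * τ (h * g₁) c * d)
        - (S1 n).card * (S2 n).card * (ω a * ω b * ω c * ω d)‖
        ≤ ε * ((S1 n).card * (S2 n).card) := by
  set a0 : A := a - ω a • (1 : A) with ha0
  have hωa0 : ω a0 = 0 := by simp [ha0, H.one]
  set K : ℝ := (‖a‖ + 1) * (‖b‖ + 1) * (‖c‖ + 1) * (‖d‖ + 1) with hK
  have hKpos : 0 < K := by positivity
  have ka : 1 ≤ ‖a‖ + 1 := by linarith [norm_nonneg a]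
  have kb : 1 ≤ ‖b‖ + 1 := by linarith [norm_nonneg b]
  have kc : 1 ≤ ‖c‖ + 1 := by linarith [norm_nonneg c]
  have kd : 1 ≤ ‖d‖ + 1 := by linarith [norm_nonneg d]
  set ε' : ℝ := ε / (3 * K) with hε'
  have hε'pos : 0 < ε' := by positivity
  filter_upwards [H.key hS1 hS2 hωa0 b hε'pos, H.erg hS2 b hε'pos, H.erg hS1 c hε'pos]
    with n hn0 hnb hnc g₁ g₂
  set s1 : ℝ := ((S1 n).card : ℝ) with hs1
  set s2 : ℝ := ((S2 n).card : ℝ) with hs2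
  have hs1n : 0 ≤ s1 := Nat.cast_nonneg _
  have hs2n : 0 ≤ s2 := Nat.cast_nonneg _
  set C : A := ∑ h ∈ S1 n, τ (h * g₁) c with hC
  set Bd : A := ∑ g ∈ S2 n, τ (g * g₂) b - ((S2 n).card * ω b) • (1 : A) with hBd
  set Cd : A := C - ((S1 n).card * ω c) • (1 : A) with hCd
  have hpB : p Bd ≤ ε' * s2 := hnb g₂
  have hpC : p Cd ≤ ε' * s1 := hnc g₁
  set X : G → A := fun h => ∑ g ∈ S2 n, τ g (τ (h * g₁) a0 * b) with hX
  -- decomposition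
  have hdec : ∑ h ∈ S1 n, ∑ g ∈ S2 n,
          ω (τ ((g * g₂) * (h * g₁)) a * τ (g * g₂) b * τ (h * g₁) c * d)
        - (S1 n).card * (S2 n).card * (ω a * ω b * ω c * ω d)
      = ∑ h ∈ S1 n, ω (τ g₂ (X h) * (τ (h * g₁) c * d))
        + ω a * ω (Bd * (C * d)) + ω a * ((S2 n).card * ω b) * ω (Cd * d) := by
    have e1 : ∀ h g, ω (τ ((g * g₂) * (h * g₁)) a * τ (g * g₂) b * τ (h * g₁) c * d) =
        ω (τ g₂ (τ g (τ (h * g₁) a0 * b)) * (τ (h * g₁) c * d)) +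
          ω a * ω (τ (g * g₂) b * (τ (h * g₁) c * d)) := by
      intro h g
      have : a = a0 + ω a • (1 : A) := by rw [ha0]; abel
      have h2 : τ ((g * g₂) * (h * g₁)) a = τ g₂ (τ g (τ (h * g₁) a0)) + ω a • (1 : A) := by
        conv_lhs => rw [this]
        rw [map_add, map_smul, map_one, H.mul, H.mul]
        congr 3
        simp only [mul_comm, mul_left_comm]
      rw [h2, map_mul (τ g), map_mul (τ g₂), H.mul g₂ g b, mul_comm g₂ g, ← smul_eq_mul (a := ω a), ← map_smul,
        ← map_add]
      congr 1
      simp only [add_mul, mul_assoc, smul_mul_assoc, one_mul]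
    have e2 : ∑ h ∈ S1 n, ∑ g ∈ S2 n, ω (τ (g * g₂) b * (τ (h * g₁) c * d)) =
        ω ((∑ g ∈ S2 n, τ (g * g₂) b) * (C * d)) := by
      rw [hC, Finset.sum_mul (S1 n), Finset.sum_mul_sum, map_sum, Finset.sum_comm]
      simp only [map_sum]
    have e3 : ∑ h ∈ S1 n, ∑ g ∈ S2 n,
        ω (τ g₂ (τ g (τ (h * g₁) a0 * b)) * (τ (h * g₁) c * d)) =
        ∑ h ∈ S1 n, ω (τ g₂ (X h) * (τ (h * g₁) c * d)) := by
      refine Finset.sum_congr rfl fun h _ => ?_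
      rw [hX]
      simp only [map_sum, Finset.sum_mul]
    simp only [e1, Finset.sum_add_distrib, ← Finset.mul_sum, e2]
    rw [e3]
    have e4 : ω ((∑ g ∈ S2 n, τ (g * g₂) b) * (C * d)) =
        ω (Bd * (C * d)) + ((S2 n).card * ω b) * ω (C * d) := by
      have : ∑ g ∈ S2 n, τ (g * g₂) b = Bd + ((S2 n).card * ω b) • (1 : A) := by rw [hBd]; abel
      rw [this, add_mul, smul_mul_assoc, one_mul, map_add, map_smul, smul_eq_mul]
    have e5 : ω (C * d) = ω (Cd * d) + ((S1 n).card * ω c) * ω d := by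
      have : C = Cd + ((S1 n).card * ω c) • (1 : A) := by rw [hCd]; abel
      conv_lhs => rw [this]
      rw [add_mul, smul_mul_assoc, one_mul, map_add, map_smul, smul_eq_mul]
    rw [e4, e5]
    ring
  rw [hdec]
  have na := H.norm_le a
  have nb := H.norm_le b
  have t1 : ‖∑ h ∈ S1 n, ω (τ g₂ (X h) * (τ (h * g₁) c * d))‖ ≤ (ε' * s1 * s2) * (‖c‖ * ‖d‖) := by
    refine (norm_sum_le _ _).trans ?_
    have : ∀ h ∈ S1 n, ‖ω (τ g₂ (X h) * (τ (h * g₁) c * d))‖ ≤ p (X h) * (‖c‖ * ‖d‖) := by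
      intro h _
      refine (H.cs' _ _).trans ?_
      rw [H.pinv]
      refine mul_le_mul_of_nonneg_left ((norm_mul_le _ _).trans ?_) (apply_nonneg p _)
      rw [H.norm_map]
    refine (Finset.sum_le_sum this).trans ?_
    rw [← Finset.sum_mul]
    exact mul_le_mul_of_nonneg_right (hn0 g₁) (by positivity)
  have hCn : ‖C‖ ≤ s1 * ‖c‖ := by
    refine (norm_sum_le _ _).trans ?_
    simp only [H.norm_map, Finset.sum_const, nsmul_eq_mul]
    exact le_rfl
  have t2 : ‖ω a * ω (Bd * (C * d))‖ ≤ ‖a‖ * ((ε' * s2) * (s1 * ‖c‖ * ‖d‖)) := by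
    rw [norm_mul]
    refine mul_le_mul na ((H.cs' _ _).trans ?_) (norm_nonneg _) (norm_nonneg _)
    refine mul_le_mul hpB ((norm_mul_le _ _).trans ?_) (norm_nonneg _) (by positivity)
    exact mul_le_mul_of_nonneg_right hCn (norm_nonneg _)
  have t3 : ‖ω a * ((S2 n).card * ω b) * ω (Cd * d)‖ ≤
      ‖a‖ * (s2 * ‖b‖) * ((ε' * s1) * ‖d‖) := by
    rw [norm_mul, norm_mul, norm_mul]
    have h2 : ‖((S2 n).card : ℂ)‖ = s2 := Complex.norm_natCast _
    rw [h2]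
    refine mul_le_mul ?_ ((H.cs' _ _).trans ?_) (norm_nonneg _) (by positivity)
    · exact mul_le_mul na (mul_le_mul_of_nonneg_left nb hs2n) (by positivity) (norm_nonneg _)
    · exact mul_le_mul_of_nonneg_right hpC (norm_nonneg _)
  have q1 : ‖c‖ * ‖d‖ ≤ K := by
    calc ‖c‖ * ‖d‖ = 1 * 1 * ‖c‖ * ‖d‖ := by ring
      _ ≤ K := by rw [hK]; gcongr <;> linarith
  have q2 : ‖a‖ * ‖c‖ * ‖d‖ ≤ K := by
    calc ‖a‖ * ‖c‖ * ‖d‖ = ‖a‖ * 1 * ‖c‖ * ‖d‖ := by ring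
      _ ≤ K := by rw [hK]; gcongr <;> linarith
  have q3 : ‖a‖ * ‖b‖ * ‖d‖ ≤ K := by
    calc ‖a‖ * ‖b‖ * ‖d‖ = ‖a‖ * ‖b‖ * 1 * ‖d‖ := by ring
      _ ≤ K := by rw [hK]; gcongr <;> linarith
  have hw : 0 ≤ ε' * s1 * s2 := by positivity
  have r1 := mul_le_mul_of_nonneg_left q1 hw
  have r2 := mul_le_mul_of_nonneg_left q2 hw
  have r3 := mul_le_mul_of_nonneg_left q3 hw
  have hfin : ε * (s1 * s2) = 3 * (ε' * s1 * s2 * K) := by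
    rw [hε']; field_simp
  rw [hfin]
  refine (norm_add_le _ _).trans ((add_le_add ((norm_add_le _ _).trans (add_le_add t1 t2)) t3).trans ?_)
  nlinarith

/-- From the measure-theoretic formulation to finite sets. -/
theorem exists_fol [DecidableEq G] [Countable G] [TopologicalSpace G] [IsTopologicalGroup G]
    [MeasurableSpace G] [BorelSpace G] (Λ : ℕ → Set G)
    (hΛmeas : ∀ n, MeasurableSet (Λ n))
    (hΛfin : ∀ᶠ n in atTop, 0 < Measure.count (Λ n) ∧ Measure.count (Λ n) < ⊤)
    (hΛfolner : ∀ g : G, Tendsto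
      (fun n => (Measure.count (symmDiff (Λ n) (Λ n * {g}))).toReal / (Measure.count (Λ n)).toReal)
      atTop (𝓝 0)) :
    ∃ S : ℕ → Finset G, Fol S ∧ ∀ᶠ n in atTop, Λ n = (S n : Set G) := by
  classical
  have hfin : ∀ᶠ n in atTop, (Λ n).Finite ∧ (Λ n).Nonempty := by
    filter_upwards [hΛfin] with n hn
    refine ⟨(Measure.count_apply_lt_top' (hΛmeas n)).mp hn.2, ?_⟩
    rw [Set.nonempty_iff_ne_empty]
    intro h
    have := hn.1
    simp [h] at this
  let S : ℕ → Finset G := fun n => if h : (Λ n).Finite then h.toFinset else ∅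
  have hS : ∀ᶠ n in atTop, Λ n = (S n : Set G) := by
    filter_upwards [hfin] with n hn
    simp [S, hn.1]
  refine ⟨S, ⟨?_, ?_⟩, hS⟩
  · filter_upwards [hfin, hS] with n hn hn'
    rw [hn'] at hn
    rw [Finset.card_pos]
    exact_mod_cast hn.2
  · intro g δ hδ
    have h1 := (hΛfolner g).eventually (gt_mem_nhds hδ)
    filter_upwards [h1, hfin, hS] with n hn hf hn'
    have hm := hΛmeas n
    have hmg : MeasurableSet (Λ n * {g}) := by
      rw [Set.mul_singleton]
      exact (Homeomorph.mulRight g).measurableEmbedding.measurableSet_image.mpr hm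
    have hsd := hm.symmDiff hmg
    have e : symmDiff (Λ n) (Λ n * {g}) =
        ((symmDiff (S n) ((S n).image (· * g)) : Finset G) : Set G) := by
      rw [hn', Set.mul_singleton]
      push_cast
      rfl
    rw [e] at hn hsd
    rw [hn'] at hn hm hf
    rw [count_finset _ hsd, count_finset _ hm] at hn
    have hpos : (0 : ℝ) < (S n).card := by
      have := hf.2
      exact_mod_cast Finset.card_pos.mpr (by exact_mod_cast this)
    rw [div_lt_iff₀ hpos] at hn
    exact hn.le

theorem setIntegral_shift [DecidableEq G] [Countable G] [TopologicalSpace G] [IsTopologicalGroup G]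
    [MeasurableSpace G] [BorelSpace G] (S : Finset G) (hS : MeasurableSet (S : Set G)) (g₁ : G)
    (f : G → ℂ) (hf : Measurable f) :
    ∫ x in (S : Set G) * {g₁}, f x ∂Measure.count = ∑ x ∈ S, f (x * g₁) := by
  have e : (S : Set G) * {g₁} = ((S.image (· * g₁) : Finset G) : Set G) := by
    rw [Set.mul_singleton]; push_cast; rfl
  have hmg : MeasurableSet ((S : Set G) * {g₁}) := by
    rw [Set.mul_singleton]
    exact (Homeomorph.mulRight g₁).measurableEmbedding.measurableSet_image.mpr hS
  rw [e] at hmg ⊢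
  rw [setIntegral_count_eq f hf.stronglyMeasurable _ hmg,
    Finset.sum_image (fun a _ b _ h => mul_right_cancel h)]

end BergelsonAux

/-- **Theorem 5.6(2): the uniform Bergelson theorem for weakly mixing C*-dynamical
systems** (counting measure case). -/
theorem bergelson_weakly_mixing_uniform
    -- a unital C*-algebra A
    {A : Type*} [NormedRing A] [StarRing A] [CStarRing A] [NormedAlgebra ℂ A]
    [CompleteSpace A] [StarModule ℂ A]
    -- a tracial state ω on A
    (ω : A →ₗ[ℂ] ℂ) (hω_pos : ∀ a : A, 0 ≤ ω (star a * a)) (hω_one : ω 1 = 1)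
    (hω_tracial : ∀ a b : A, ω (a * b) = ω (b * a))
    -- a countable second countable topological abelian group G with the counting measure
    -- on its Borel σ-algebra
    {G : Type*} [CommGroup G] [Countable G] [TopologicalSpace G] [IsTopologicalGroup G]
    [SecondCountableTopology G] [MeasurableSpace G] [BorelSpace G]
    -- the action τ, making (A, ω, τ, G) a C*-dynamical system
    (τ : G → A ≃⋆ₐ[ℂ] A)
    (hτ_one : ∀ a : A, τ 1 a = a)
    (hτ_mul : ∀ g h a, τ g (τ h a) = τ (g * h) a)
    (hω_inv : ∀ g a, ω (τ g a) = ω a)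
    (hτ_meas : ∀ a b : A, Measurable fun g : G => ω (a * τ g b))
    -- the system is weakly mixing (w.r.t. some, equivalently every, Følner sequence in G)
    (hWM : ∃ Λ : ℕ → Set G, (∀ n, MeasurableSet (Λ n)) ∧
      (∀ᶠ n in atTop, 0 < Measure.count (Λ n) ∧ Measure.count (Λ n) < ⊤) ∧
      (∀ g : G, Tendsto
        (fun n => (Measure.count (symmDiff (Λ n) (Λ n * {g}))).toReal / (Measure.count (Λ n)).toReal)
        atTop (𝓝 0)) ∧
      ∀ a b : A, Tendsto
        (fun n => (Measure.count (Λ n)).toReal⁻¹ * ∫ g in Λ n, ‖ω (a * τ g b) - ω a * ω b‖ ∂Measure.count)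
        atTop (𝓝 0))
    -- (g,h,j,k) ↦ ω(τ_h(a₁) τ_g(a₂) τ_{gh}(a₃) τ_{jk}(a₄) τ_j(a₅) τ_k(a₆)) is
    -- Σ² × Σ²-measurable
    (hmeas6 : ∀ a₁ a₂ a₃ a₄ a₅ a₆ : A, Measurable fun q : (G × G) × (G × G) =>
      ω (τ q.1.2 a₁ * τ q.1.1 a₂ * τ (q.1.1 * q.1.2) a₃ *
        τ (q.2.1 * q.2.2) a₄ * τ q.2.1 a₅ * τ q.2.2 a₆))
    -- a uniform Følner sequence (Λ1 n) in G ...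
    (Λ1 : ℕ → Set G)
    (hΛ1meas : ∀ n, MeasurableSet (Λ1 n))
    (hΛ1fin : ∀ᶠ n in atTop, 0 < Measure.count (Λ1 n) ∧ Measure.count (Λ1 n) < ⊤)
    (hΛ1folner : ∀ g : G, Tendsto
      (fun n => (Measure.count (symmDiff (Λ1 n) (Λ1 n * {g}))).toReal / (Measure.count (Λ1 n)).toReal)
      atTop (𝓝 0))
    (hΛ1unif : ∀ᶠ m in atTop, ∀ ε > (0 : ℝ), ∀ᶠ n in atTop, ∀ g ∈ Λ1 m,
      (Measure.count (symmDiff (Λ1 n) (Λ1 n * {g}))).toReal ≤ ε * (Measure.count (Λ1 n)).toReal)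
    -- ... satisfying the Tempel'man condition ...
    (hΛ1temp : ∃ c : ℝ, 0 < c ∧ ∀ᶠ n in atTop, MeasurableSet ((Λ1 n)⁻¹ * Λ1 n) ∧
      Measure.count ((Λ1 n)⁻¹ * Λ1 n) ≤ ENNReal.ofReal c * Measure.count (Λ1 n))
    -- ... and such that (Λ1 n⁻¹ Λ1 n) is also Følner in G
    (hΛ1invfin : ∀ᶠ n in atTop, 0 < Measure.count ((Λ1 n)⁻¹ * Λ1 n) ∧ Measure.count ((Λ1 n)⁻¹ * Λ1 n) < ⊤)
    (hΛ1invfolner : ∀ g : G, Tendsto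
      (fun n => (Measure.count (symmDiff ((Λ1 n)⁻¹ * Λ1 n) (((Λ1 n)⁻¹ * Λ1 n) * {g}))).toReal /
        (Measure.count ((Λ1 n)⁻¹ * Λ1 n)).toReal)
      atTop (𝓝 0))
    -- a uniform Følner sequence (Λ2 n) in G ...
    (Λ2 : ℕ → Set G)
    (hΛ2meas : ∀ n, MeasurableSet (Λ2 n))
    (hΛ2fin : ∀ᶠ n in atTop, 0 < Measure.count (Λ2 n) ∧ Measure.count (Λ2 n) < ⊤)
    (hΛ2folner : ∀ g : G, Tendsto
      (fun n => (Measure.count (symmDiff (Λ2 n) (Λ2 n * {g}))).toReal / (Measure.count (Λ2 n)).toReal)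
      atTop (𝓝 0))
    (hΛ2unif : ∀ᶠ m in atTop, ∀ ε > (0 : ℝ), ∀ᶠ n in atTop, ∀ g ∈ Λ2 m,
      (Measure.count (symmDiff (Λ2 n) (Λ2 n * {g}))).toReal ≤ ε * (Measure.count (Λ2 n)).toReal)
    -- ... satisfying the Tempel'man condition ...
    (hΛ2temp : ∃ c : ℝ, 0 < c ∧ ∀ᶠ n in atTop, MeasurableSet ((Λ2 n)⁻¹ * Λ2 n) ∧
      Measure.count ((Λ2 n)⁻¹ * Λ2 n) ≤ ENNReal.ofReal c * Measure.count (Λ2 n))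
    -- ... and such that (Λ2 n⁻¹ Λ2 n) is also Følner in G
    (hΛ2invfin : ∀ᶠ n in atTop, 0 < Measure.count ((Λ2 n)⁻¹ * Λ2 n) ∧ Measure.count ((Λ2 n)⁻¹ * Λ2 n) < ⊤)
    (hΛ2invfolner : ∀ g : G, Tendsto
      (fun n => (Measure.count (symmDiff ((Λ2 n)⁻¹ * Λ2 n) (((Λ2 n)⁻¹ * Λ2 n) * {g}))).toReal /
        (Measure.count ((Λ2 n)⁻¹ * Λ2 n)).toReal)
      atTop (𝓝 0))
    -- the system is uniformly asymptotically abelian with respect to (Λ1 n) (ε-form)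
    (hcomm_meas : ∀ a b : A, Measurable fun g : G => ‖a * τ g b - τ g b * a‖)
    (hUAA : ∀ a b : A, ∀ ε > (0 : ℝ), ∀ᶠ n in atTop, ∀ h : G,
      (Measure.count (Λ1 n)).toReal⁻¹ * ∫ g in Λ1 n * {h}, ‖a * τ g b - τ g b * a‖ ∂Measure.count ≤ ε)
 :
    -- conclusion (in ε-form)
    ∀ a b c d : A, ∀ ε > (0 : ℝ), ∀ᶠ n in atTop, ∀ g₁ g₂ : G,
      ‖((Measure.count (Λ1 n)).toReal * (Measure.count (Λ2 n)).toReal)⁻¹ •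
          (∫ h in Λ1 n * {g₁}, ∫ g in Λ2 n * {g₂},
            ω (τ (g * h) a * τ g b * τ h c * d) ∂Measure.count ∂Measure.count)
        - ω a * ω b * ω c * ω d‖ ≤ ε := by
  classical
  obtain ⟨p, hp1, hp2, hp3, hp4⟩ := BergelsonAux.exists_gns_seminorm ω hω_pos hω_one
  obtain ⟨S1, hS1, hΛS1⟩ := BergelsonAux.exists_fol Λ1 hΛ1meas hΛ1fin hΛ1folner
  obtain ⟨S2, hS2, hΛS2⟩ := BergelsonAux.exists_fol Λ2 hΛ2meas hΛ2fin hΛ2folner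
  have H : BergelsonAux.Sys ω τ p :=
    { sq := hp1
      cs := hp2
      le := hp3
      symm := hp4
      norm_star := fun x => norm_star x
      norm_map := fun g x => BergelsonAux.norm_tau (τ g) x
      mul := hτ_mul
      inv := hω_inv
      one := hω_one
      trace := hω_tracial
      seq := by
        intro y hy ε hε
        obtain ⟨Λ, hm, hf, hfol, hwm⟩ := hWM
        obtain ⟨S, hS, hΛS⟩ := BergelsonAux.exists_fol Λ hm hf hfol
        have key : ∀ s : Finset G, (∀ x ∈ s, True) →
            ∃ g, True ∧ ∀ x ∈ s, ‖ω (star (τ x y) * τ g y)‖ ≤ ε := by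
          intro s _
          have hlim : Tendsto (fun n => ∑ x ∈ s, (Measure.count (Λ n)).toReal⁻¹ *
              ∫ g in Λ n, ‖ω (star (τ x y) * τ g y) - ω (star (τ x y)) * ω y‖ ∂Measure.count)
              atTop (𝓝 0) := by
            have := tendsto_finsetSum s (fun x _ => hwm (star (τ x y)) y)
            simpa using this
          obtain ⟨n, hn1, hn2, hn3⟩ :=
            ((hlim.eventually (gt_mem_nhds hε)).and (hΛS.and hS.ne)).exists
          have hmS : MeasurableSet (S n : Set G) := hn2 ▸ hm n
          have hn3' : (0 : ℝ) < (S n).card := by exact_mod_cast hn3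
          simp only [hy, mul_zero, sub_zero, hn2] at hn1
          rw [BergelsonAux.count_finset _ hmS, ← Finset.mul_sum,
            Finset.sum_congr rfl (fun x _ => BergelsonAux.setIntegral_count_eq
              (fun g => ‖ω (star (τ x y) * τ g y)‖)
              (hτ_meas _ _).norm.stronglyMeasurable (S n) hmS), Finset.sum_comm,
            inv_mul_lt_iff₀ hn3'] at hn1
          have : ∃ g ∈ S n, ∑ x ∈ s, ‖ω (star (τ x y) * τ g y)‖ ≤ ε := by
            by_contra! hcon
            have := Finset.sum_le_sum fun g hg => (hcon g hg).le
            simp only [Finset.sum_const, nsmul_eq_mul] at this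
            linarith
          obtain ⟨g, _, hg⟩ := this
          refine ⟨g, trivial, fun x hx => le_trans ?_ hg⟩
          exact Finset.single_le_sum (f := fun x => ‖ω (star (τ x y) * τ g y)‖)
            (fun i _ => norm_nonneg _) hx
        obtain ⟨k, _, hk⟩ := exists_seq_of_forall_finset_exists (fun _ : G => True)
          (fun x g => ‖ω (star (τ x y) * τ g y)‖ ≤ ε) key
        exact ⟨k, fun i j hij => hk i j hij⟩ }
  intro a b c d ε hε
  filter_upwards [H.main hS1 hS2 a b c d hε, hΛS1, hΛS2, hS1.ne, hS2.ne]
    with n hn h1 h2 hc1 hc2 g₁ g₂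
  have hm1 : MeasurableSet (S1 n : Set G) := h1 ▸ hΛ1meas n
  have hm2 : MeasurableSet (S2 n : Set G) := h2 ▸ hΛ2meas n
  have hjoint : Measurable fun q : G × G => ω (τ (q.1 * q.2) a * τ q.1 b * τ q.2 c * d) := by
    have h := (hmeas6 d 1 1 a b c).comp
      (show Measurable fun q : G × G => ((((1 : G), (1 : G)), q) : (G × G) × (G × G)) from
        measurable_const.prodMk measurable_id)
    convert h using 2 with q
    simp only [Function.comp, map_one, mul_one, hτ_one]
    rw [hω_tracial]
    simp only [mul_assoc]
  have hsec : ∀ h, Measurable fun g => ω (τ (g * h) a * τ g b * τ h c * d) := fun h =>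
    hjoint.comp (measurable_id.prodMk measurable_const)
  have hsec' : ∀ g, Measurable fun h => ω (τ (g * h) a * τ g b * τ h c * d) := fun g =>
    hjoint.comp (measurable_const.prodMk measurable_id)
  have hinner : ∀ h, ∫ g in Λ2 n * {g₂}, ω (τ (g * h) a * τ g b * τ h c * d) ∂Measure.count =
      ∑ g ∈ S2 n, ω (τ ((g * g₂) * h) a * τ (g * g₂) b * τ h c * d) := by
    intro h
    rw [h2]
    exact BergelsonAux.setIntegral_shift (S2 n) hm2 g₂ _ (hsec h)
  simp only [hinner]
  rw [h1, h2, BergelsonAux.setIntegral_shift (S1 n) hm1 g₁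
    (fun h => ∑ g ∈ S2 n, ω (τ ((g * g₂) * h) a * τ (g * g₂) b * τ h c * d))
    (Finset.measurable_fun_sum _ fun g _ => hsec' (g * g₂)),
    BergelsonAux.count_finset _ hm1, BergelsonAux.count_finset _ hm2]
  have hpos : (0 : ℝ) < (S1 n).card * (S2 n).card := by positivity
  have hn' := hn g₁ g₂
  set T := ∑ h ∈ S1 n, ∑ g ∈ S2 n,
    ω (τ ((g * g₂) * (h * g₁)) a * τ (g * g₂) b * τ (h * g₁) c * d) with hT
  have e : ((S1 n).card * (S2 n).card : ℝ)⁻¹ • T - ω a * ω b * ω c * ω d =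
      ((S1 n).card * (S2 n).card : ℝ)⁻¹ •
        (T - (S1 n).card * (S2 n).card * (ω a * ω b * ω c * ω d)) := by
    rw [smul_sub]
    congr 1
    rw [Complex.real_smul]
    have k1 : ((S1 n).card : ℂ) ≠ 0 := by exact_mod_cast hc1.ne'
    have k2 : ((S2 n).card : ℂ) ≠ 0 := by exact_mod_cast hc2.ne'
    push_cast
    field_simp
  rw [e, norm_smul, norm_inv, Real.norm_of_nonneg hpos.le, inv_mul_le_iff₀ hpos]
  linarith
end

section
/- (recurrence corollary, non-uniform case) Let (A,ω,τ,G) be a weakly mixing C*-dynamical system with ω tracial, where G is a second countable topological group, Σ its Borel σ-algebra, μ a σ-finite right and left invariant measure, and (g,h,j,k) ↦ ω(τ_h(a₁) τ_g(a₂) τ_{gh}(a₃) τ_{jk}(a₄) τ_j(a₅) τ_k(a₆)) is Σ² × Σ²-measurable for all a₁,...,a₆ ∈ A. Assume uniform Følner sequences (Λ_{1,n}) and (Λ_{2,n}) in G satisfying the Tempel'man condition with (Λ_{1,n}⁻¹Λ_{1,n}) and (Λ_{2,n}⁻¹Λ_{2,n}) also Følner in G, and that (A,ω,τ,G) is asymptotically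 abelian with respect to (Λ_{1,n}). Then for any ε > 0 and any a, b, c, d ∈ A there is n₀ ∈ ℕ such that for every n > n₀ there exist g ∈ Λ_{2,n} and h ∈ Λ_{1,n} with |ω(τ_{gh}(a) τ_g(b) τ_h(c) d)| > |ω(a)ω(b)ω(c)ω(d)| − ε. -/
open MeasureTheory Filter Topology
open scoped Pointwise ComplexOrder

section
set_option linter.unusedSectionVars false
variable {A : Type*} [NormedRing A] [StarRing A] [CStarRing A] [NormedAlgebra ℂ A]
    [CompleteSpace A] [StarModule ℂ A]

theorem rn_star (ω : A →ₗ[ℂ] ℂ) (hpos : ∀ a : A, 0 ≤ ω (star a * a)) (x : A) :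
    ω (star x) = star (ω x) := by
  have h0 := (Complex.nonneg_iff.1 (hpos x)).2
  have h1 := (Complex.nonneg_iff.1 (hpos 1)).2
  have h2 := (Complex.nonneg_iff.1 (hpos (1 + x))).2
  have h3 := (Complex.nonneg_iff.1 (hpos (1 + Complex.I • x))).2
  simp [mul_add, add_mul] at h0 h1 h2 h3
  apply Complex.ext
  · simp; linarith
  · simp; linarith

theorem rn_exists_sq (y : A) : ∃ z : A, algebraMap ℂ A ((‖y‖ ^ 2 : ℝ) : ℂ) - star y * y = star z * z := by
  let _ : CStarAlgebra A := {}
  let _ : PartialOrder A := CStarAlgebra.spectralOrder A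
  let _ : StarOrderedRing A := CStarAlgebra.spectralOrderedRing A
  rw [← CStarAlgebra.nonneg_iff_eq_star_mul_self]
  have := CStarAlgebra.star_mul_le_algebraMap_norm_sq (a := y)
  rw [sub_nonneg]
  exact this

theorem rn_tau_norm (τ : A ≃⋆ₐ[ℂ] A) (x : A) : ‖τ x‖ ≤ ‖x‖ := by
  let _ : CStarAlgebra A := {}
  exact NonUnitalStarAlgHom.norm_apply_le τ x

theorem rn_cs (ω : A →ₗ[ℂ] ℂ) (hpos : ∀ a : A, 0 ≤ ω (star a * a)) (x y : A) :
    ‖ω (star x * y)‖ ^ 2 ≤ (ω (star x * x)).re * (ω (star y * y)).re := by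
  let c : PreInnerProductSpace.Core ℂ A :=
    { inner := fun x y => ω (star x * y)
      conj_inner_symm := fun x y => by
        have := rn_star ω hpos (star y * x)
        simp at this
        simp [this]
      re_inner_nonneg := fun x => (Complex.nonneg_iff.1 (hpos x)).1
      add_left := fun x y z => by simp [add_mul]
      smul_left := fun x y r => by simp }
  have := @InnerProductSpace.Core.inner_mul_inner_self_le ℂ A _ _ _ c x y
  have e : ‖ω (star y * x)‖ = ‖ω (star x * y)‖ := by
    have := rn_star ω hpos (star y * x)
    simp at this
    rw [this]; simp
  change ‖ω (star x * y)‖ * ‖ω (star y * x)‖ ≤ (ω (star x * x)).re * (ω (star y * y)).re at this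
  rw [e] at this
  rw [sq]; exact this


theorem rn_sq_le (ω : A →ₗ[ℂ] ℂ) (hpos : ∀ a : A, 0 ≤ ω (star a * a)) (hone : ω 1 = 1) (y : A) :
    (ω (star y * y)).re ≤ ‖y‖ ^ 2 := by
  obtain ⟨z, hz⟩ := rn_exists_sq y
  have h := (Complex.nonneg_iff.1 (hpos z)).1
  rw [← hz, Algebra.algebraMap_eq_smul_one, map_sub, map_smul, hone, smul_eq_mul, mul_one,
    Complex.sub_re, Complex.ofReal_re] at h
  linarith

theorem rn_cs2 (ω : A →ₗ[ℂ] ℂ) (hpos : ∀ a : A, 0 ≤ ω (star a * a)) (hone : ω 1 = 1) (x y : A) :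
    ‖ω (x * y)‖ ^ 2 ≤ ‖x‖ ^ 2 * (ω (star y * y)).re := by
  have h := rn_cs ω hpos (star x) y
  have h2 := rn_sq_le ω hpos hone (star x)
  rw [norm_star] at h2
  rw [star_star] at h h2
  have h3 := (Complex.nonneg_iff.1 (hpos y)).1
  exact h.trans (mul_le_mul_of_nonneg_right h2 h3)

theorem rn_mul_norm (ω : A →ₗ[ℂ] ℂ) (hpos : ∀ a : A, 0 ≤ ω (star a * a)) (hone : ω 1 = 1)
    (x y : A) : ‖ω (x * y)‖ ≤ ‖x‖ * ‖y‖ := by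
  have h := rn_cs2 ω hpos hone x y
  have h2 := rn_sq_le ω hpos hone y
  have hh : 0 ≤ ‖x‖ * ‖y‖ := by positivity
  refine (abs_le_of_sq_le_sq' ?_ hh).2
  rw [mul_pow]
  exact h.trans (mul_le_mul_of_nonneg_left h2 (by positivity))

theorem rn_norm (ω : A →ₗ[ℂ] ℂ) (hpos : ∀ a : A, 0 ≤ ω (star a * a)) (hone : ω 1 = 1)
    (x : A) : ‖ω x‖ ≤ ‖x‖ := by
  have h := rn_cs2 ω hpos hone x 1
  simp [hone] at h
  exact abs_le_of_sq_le_sq' h (norm_nonneg _) |>.2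

/-- `v` is `r`-small in the dual sense with respect to the state `ω`. -/
def RnSmall (ω : A →ₗ[ℂ] ℂ) (v : A) (r : ℝ) : Prop := ∀ X : A, ‖ω (X * v)‖ ≤ ‖X‖ * r

theorem rn_small_of_q (ω : A →ₗ[ℂ] ℂ) (hpos : ∀ a : A, 0 ≤ ω (star a * a)) (hone : ω 1 = 1)
    (v : A) (r : ℝ) (hr : 0 ≤ r) (h : (ω (star v * v)).re ≤ r ^ 2) : RnSmall ω v r := by
  intro X
  have hh : 0 ≤ ‖X‖ * r := by positivity
  refine (abs_le_of_sq_le_sq' ?_ hh).2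
  rw [mul_pow]
  exact (rn_cs2 ω hpos hone X v).trans (mul_le_mul_of_nonneg_left h (by positivity))

theorem rn_sum_q (ω : A →ₗ[ℂ] ℂ) (hpos : ∀ a : A, 0 ≤ ω (star a * a)) (hone : ω 1 = 1)
    (v : ℕ → A) (C δ : ℝ) (hC : ∀ i, ‖v i‖ ≤ C) (hδ0 : 0 ≤ δ)
    (hδ : ∀ i j, i < j → ‖ω (star (v i) * v j)‖ ≤ δ) (N : ℕ) :
    (ω (star (∑ i ∈ Finset.range N, v i) * ∑ i ∈ Finset.range N, v i)).re
      ≤ N * C ^ 2 + N ^ 2 * δ := by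
  have h1 : ∀ i j, (ω (star (v i) * v j)).re ≤ (if i = j then C ^ 2 else 0) + δ := by
    intro i j
    rcases lt_trichotomy i j with h | h | h
    · rw [if_neg h.ne, zero_add]
      exact (Complex.re_le_norm _).trans (hδ i j h)
    · subst h
      rw [if_pos rfl]
      have := rn_sq_le ω hpos hone (v i)
      have h2 : ‖v i‖ ^ 2 ≤ C ^ 2 := pow_le_pow_left₀ (norm_nonneg _) (hC i) 2
      linarith
    · rw [if_neg h.ne', zero_add]
      have := rn_star ω hpos (star (v j) * v i)
      simp only [star_mul, star_star] at this
      rw [this]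
      refine (Complex.re_le_norm _).trans ?_
      rw [norm_star]
      exact hδ j i h
  rw [star_sum, Finset.sum_mul_sum, map_sum, Complex.re_sum]
  calc _ ≤ ∑ i ∈ Finset.range N, ∑ j ∈ Finset.range N, ((if i = j then C ^ 2 else 0) + δ) := by
        refine Finset.sum_le_sum fun i _ => ?_
        rw [map_sum, Complex.re_sum]
        exact Finset.sum_le_sum fun j _ => h1 i j
    _ = N * C ^ 2 + N ^ 2 * δ := by
        simp_rw [Finset.sum_add_distrib, Finset.sum_ite_eq]
        rw [Finset.sum_congr rfl (fun i hi => if_pos hi)]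
        simp
        ring

theorem rn_ergodic (ω : A →ₗ[ℂ] ℂ) (hpos : ∀ a : A, 0 ≤ ω (star a * a)) (hone : ω 1 = 1)
    {G : Type*} (τ : G → A ≃⋆ₐ[ℂ] A)
    (hWM : ∀ (Q : Finset (A × A)) (δ : ℝ), 0 < δ →
      ∃ g, ∀ q ∈ Q, ‖ω (q.1 * τ g q.2) - ω q.1 * ω q.2‖ < δ)
    (Z : Finset A) (hZ : ∀ z ∈ Z, ω z = 0) (η : ℝ) (hη : 0 < η) :
    ∃ s : ℕ → G, (∀ i j, i < j → ∀ z ∈ Z, ‖ω (star (τ (s i) z) * τ (s j) z)‖ ≤ η) ∧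
      ∀ᶠ N : ℕ in atTop, ∀ z ∈ Z, RnSmall ω (∑ i ∈ Finset.range N, τ (s i) z) (N * η) := by
  classical
  set δ := min η (η ^ 2 / 2) with hδ
  have hδ0 : 0 < δ := by positivity
  obtain ⟨s, -, hs⟩ := exists_seq_of_forall_finset_exists (fun _ : G => True)
    (fun g g' => ∀ z ∈ Z, ‖ω (star (τ g z) * τ g' z)‖ ≤ δ) (by
      intro S _
      obtain ⟨g, hg⟩ := hWM ((S ×ˢ Z).image fun p => (star (τ p.1 p.2), p.2)) δ hδ0
      refine ⟨g, trivial, fun x hx z hz => ?_⟩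
      have := hg (star (τ x z), z) (Finset.mem_image.2 ⟨(x, z), by simp [hx, hz], rfl⟩)
      simp only [hZ z hz, mul_zero, sub_zero] at this
      exact this.le)
  refine ⟨s, fun i j hij z hz => (hs i j hij z hz).trans (min_le_left _ _), ?_⟩
  rw [Filter.eventually_all_finset]
  intro z hz
  filter_upwards [eventually_ge_atTop ⌈2 * ‖z‖ ^ 2 / η ^ 2⌉₊] with N hN
  have hN' : 2 * ‖z‖ ^ 2 / η ^ 2 ≤ N := Nat.ceil_le.1 hN
  rw [div_le_iff₀ (by positivity)] at hN'
  refine rn_small_of_q ω hpos hone _ _ (by positivity) ?_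
  refine (rn_sum_q ω hpos hone (fun i => τ (s i) z) ‖z‖ δ (fun i => rn_tau_norm _ _) hδ0.le
    (fun i j hij => hs i j hij z hz) N).trans ?_
  have h2 : δ ≤ η ^ 2 / 2 := min_le_right _ _
  have h3 : (N : ℝ) ^ 2 * δ ≤ N ^ 2 * (η ^ 2 / 2) := mul_le_mul_of_nonneg_left h2 (by positivity)
  have h4 : (N : ℝ) * (2 * ‖z‖ ^ 2) ≤ N * (N * η ^ 2) :=
    mul_le_mul_of_nonneg_left hN' (by positivity)
  nlinarith

theorem rn_box (ω : A →ₗ[ℂ] ℂ) (hpos : ∀ a : A, 0 ≤ ω (star a * a)) (hone : ω 1 = 1)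
    (htr : ∀ a b : A, ω (a * b) = ω (b * a))
    {G : Type*} [CommGroup G] (τ : G → A ≃⋆ₐ[ℂ] A)
    (hmul : ∀ g h a, τ g (τ h a) = τ (g * h) a)
    (g h : ℕ → G) (M N : ℕ) (a b c d : A) (η : ℝ) (hη : 0 ≤ η)
    (hsm : ∀ j < N, ∀ j' < N, j ≠ j' →
      RnSmall ω (∑ i ∈ Finset.range M, τ (g i) (τ (h j) a * star (τ (h j') a))) (M * η)) :
    ‖∑ i ∈ Finset.range M, ∑ j ∈ Finset.range N,
        ω (τ (g i * h j) a * τ (g i) b * τ (h j) c * d)‖ ^ 2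
      ≤ M ^ 2 * (‖b‖ * (‖c‖ * ‖d‖)) ^ 2 * (N * ‖a‖ ^ 2 + N ^ 2 * η) := by
  set W : ℕ → A := fun i => ∑ j ∈ Finset.range N, τ (h j) c * d * τ (g i * h j) a with hW
  have e1 : ∀ i, ∑ j ∈ Finset.range N, ω (τ (g i * h j) a * τ (g i) b * τ (h j) c * d)
      = ω (τ (g i) b * W i) := by
    intro i
    rw [hW, Finset.mul_sum, map_sum]
    refine Finset.sum_congr rfl fun j _ => ?_
    rw [mul_assoc, mul_assoc, htr]
    simp only [mul_assoc]
  simp_rw [e1]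
  -- the diagonal/off-diagonal bound for `V`
  set V : ℕ → ℕ → A := fun j j' =>
    ∑ i ∈ Finset.range M, τ (g i) (τ (h j) a * star (τ (h j') a)) with hV
  have hVsm : ∀ j < N, ∀ j' < N,
      RnSmall ω (V j j') (M * ((if j = j' then ‖a‖ ^ 2 else 0) + η)) := by
    intro j hj j' hj'
    by_cases hjj : j = j'
    · rw [if_pos hjj]
      intro X
      refine (rn_mul_norm ω hpos hone _ _).trans ?_
      refine mul_le_mul_of_nonneg_left ?_ (norm_nonneg _)
      calc ‖V j j'‖ ≤ ∑ i ∈ Finset.range M, ‖a‖ ^ 2 := by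
            refine norm_sum_le_of_le _ fun i _ => ?_
            refine (rn_tau_norm _ _).trans ((norm_mul_le _ _).trans ?_)
            rw [norm_star, sq]
            exact mul_le_mul (rn_tau_norm _ _) (rn_tau_norm _ _) (norm_nonneg _) (norm_nonneg _)
        _ = M * ‖a‖ ^ 2 := by simp
        _ ≤ _ := by gcongr; linarith
    · rw [if_neg hjj, zero_add]
      exact hsm j hj j' hj' hjj
  set X : ℕ → ℕ → A := fun j j' => star d * star (τ (h j') c) * τ (h j) c * d with hX
  have hXn : ∀ j j', ‖X j j'‖ ≤ (‖c‖ * ‖d‖) ^ 2 := by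
    intro j j'
    calc ‖X j j'‖ ≤ ‖star d‖ * ‖star (τ (h j') c)‖ * ‖τ (h j) c‖ * ‖d‖ := by
          refine (norm_mul_le _ _).trans ?_
          gcongr
          refine (norm_mul_le _ _).trans ?_
          gcongr
          exact norm_mul_le _ _
      _ ≤ ‖d‖ * ‖c‖ * ‖c‖ * ‖d‖ := by
          rw [norm_star, norm_star]
          gcongr <;> exact rn_tau_norm _ _
      _ = _ := by ring
  have e2 : ∑ i ∈ Finset.range M, ω (star (W i) * W i)
      = ∑ j' ∈ Finset.range N, ∑ j ∈ Finset.range N, ω (X j j' * V j j') := by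
    have : ∀ i, ω (star (W i) * W i) = ∑ j' ∈ Finset.range N, ∑ j ∈ Finset.range N,
        ω (X j j' * τ (g i) (τ (h j) a * star (τ (h j') a))) := by
      intro i
      rw [hW, star_sum, Finset.sum_mul_sum, map_sum]
      refine Finset.sum_congr rfl fun j' _ => ?_
      rw [map_sum]
      refine Finset.sum_congr rfl fun j _ => ?_
      rw [map_mul (τ (g i)), map_star (τ (g i)), hmul, hmul, hX]
      simp only [star_mul, mul_assoc]
      rw [htr]
      simp only [mul_assoc]
    simp_rw [this, hV, Finset.mul_sum, map_sum]
    rw [Finset.sum_comm]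
    refine Finset.sum_congr rfl fun j' _ => ?_
    rw [Finset.sum_comm]
  have e3 : ∑ i ∈ Finset.range M, (ω (star (W i) * W i)).re
      ≤ M * (‖c‖ * ‖d‖) ^ 2 * (N * ‖a‖ ^ 2 + N ^ 2 * η) := by
    rw [← Complex.re_sum, e2]
    refine (Complex.re_le_norm _).trans ?_
    calc _ ≤ ∑ j' ∈ Finset.range N, ∑ j ∈ Finset.range N,
          (‖c‖ * ‖d‖) ^ 2 * (M * ((if j = j' then ‖a‖ ^ 2 else 0) + η)) := by
          refine norm_sum_le_of_le _ fun j' hj' => norm_sum_le_of_le _ fun j hj => ?_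
          refine (hVsm j (Finset.mem_range.1 hj) j' (Finset.mem_range.1 hj') _).trans ?_
          refine mul_le_mul_of_nonneg_right (hXn j j') ?_
          split_ifs <;> positivity
      _ = _ := by
          simp_rw [← Finset.mul_sum, Finset.sum_add_distrib, Finset.sum_ite_eq']
          rw [Finset.sum_congr rfl (fun i hi => if_pos hi)]
          simp
          ring
  have e4 : ∀ i, ‖ω (τ (g i) b * W i)‖ ^ 2 ≤ ‖b‖ ^ 2 * (ω (star (W i) * W i)).re := by
    intro i
    refine (rn_cs2 ω hpos hone _ _).trans ?_
    refine mul_le_mul_of_nonneg_right ?_ (Complex.nonneg_iff.1 (hpos (W i))).1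
    exact pow_le_pow_left₀ (norm_nonneg _) (rn_tau_norm _ _) 2
  calc _ ≤ (∑ i ∈ Finset.range M, ‖ω (τ (g i) b * W i)‖) ^ 2 :=
        pow_le_pow_left₀ (norm_nonneg _) (norm_sum_le _ _) 2
    _ ≤ M * ∑ i ∈ Finset.range M, ‖ω (τ (g i) b * W i)‖ ^ 2 := by
        have := sq_sum_le_card_mul_sum_sq (s := Finset.range M)
          (f := fun i => ‖ω (τ (g i) b * W i)‖)
        simpa using this
    _ ≤ M * ∑ i ∈ Finset.range M, ‖b‖ ^ 2 * (ω (star (W i) * W i)).re := by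
        gcongr with i _
        exact e4 i
    _ = M * (‖b‖ ^ 2 * ∑ i ∈ Finset.range M, (ω (star (W i) * W i)).re) := by
        rw [← Finset.mul_sum]
    _ ≤ M * (‖b‖ ^ 2 * (M * (‖c‖ * ‖d‖) ^ 2 * (N * ‖a‖ ^ 2 + N ^ 2 * η))) := by gcongr
    _ = _ := by ring


theorem rn_small_tau (ω : A →ₗ[ℂ] ℂ)
    {G : Type*} [CommGroup G] (τ : G → A ≃⋆ₐ[ℂ] A)
    (hτ1 : ∀ a : A, τ 1 a = a)
    (hmul : ∀ g h a, τ g (τ h a) = τ (g * h) a)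
    (hinv : ∀ g a, ω (τ g a) = ω a) (v : A) (r : ℝ) (hr : 0 ≤ r) (h : RnSmall ω v r) (g : G) :
    RnSmall ω (τ g v) r := by
  intro X
  have e : ω (X * τ g v) = ω (τ g⁻¹ X * v) := by
    rw [← hinv g⁻¹, map_mul, hmul, inv_mul_cancel, hτ1]
  rw [e]
  exact (h _).trans (mul_le_mul_of_nonneg_right (rn_tau_norm _ _) hr)

theorem rn_main_est (ω : A →ₗ[ℂ] ℂ) (hpos : ∀ a : A, 0 ≤ ω (star a * a)) (hone : ω 1 = 1)
    (htr : ∀ a b : A, ω (a * b) = ω (b * a))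
    {G : Type*} [CommGroup G] (τ : G → A ≃⋆ₐ[ℂ] A)
    (hτ1 : ∀ a : A, τ 1 a = a)
    (hmul : ∀ g h a, τ g (τ h a) = τ (g * h) a)
    (hinv : ∀ g a, ω (τ g a) = ω a)
    (hWM : ∀ (Q : Finset (A × A)) (δ : ℝ), 0 < δ →
      ∃ g, ∀ q ∈ Q, ‖ω (q.1 * τ g q.2) - ω q.1 * ω q.2‖ < δ)
    (a b c d : A) (ε : ℝ) (hε : 0 < ε) :
    ∃ (s t : ℕ → G) (M N : ℕ), 0 < M ∧ 0 < N ∧ ∀ g h : G,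
      ‖∑ i ∈ Finset.range M, ∑ j ∈ Finset.range N,
        ω (τ (g * s i * (h * t j)) a * τ (g * s i) b * τ (h * t j) c * d)
        - M * N * (ω a * ω b * ω c * ω d)‖ < M * N * ε := by
  classical
  set a0 : A := a - ω a • 1 with ha0
  set b0 : A := b - ω b • 1 with hb0
  set c0 : A := c - ω c • 1 with hc0
  have cen : ∀ x : A, ω (x - ω x • 1) = 0 := by
    intro x
    rw [map_sub, map_smul, hone]; simp
  set K : ℝ := ‖b‖ * (‖c‖ * ‖d‖) with hK
  set K' : ℝ := K + ‖ω a‖ * (‖c‖ * ‖d‖) + ‖ω a * ω b‖ * ‖d‖ with hK'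
  have hK0 : 0 ≤ K := by positivity
  have hK'0 : 0 ≤ K' := by positivity
  set θ : ℝ := min 1 (ε / (K' + 1)) with hθ
  have hθ0 : 0 < θ := by positivity
  have hθ1 : θ ≤ 1 := min_le_left _ _
  have hθε : θ * K' < ε := by
    have h1 : θ ≤ ε / (K' + 1) := min_le_right _ _
    rw [le_div_iff₀ (by positivity)] at h1
    nlinarith
  set η : ℝ := θ ^ 2 / 3 with hη
  have hη0 : 0 < η := by positivity
  have hηθ : η ≤ θ := by nlinarith
  -- choose the sequence `t`
  obtain ⟨t, ht1, ht2⟩ := rn_ergodic ω hpos hone τ hWM {a0, c0}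
    (by intro z hz; simp only [Finset.mem_insert, Finset.mem_singleton] at hz
        rcases hz with rfl | rfl <;> exact cen _) η hη0
  obtain ⟨N, ⟨hN1, hN2⟩, hN3⟩ := ((ht2.and (eventually_gt_atTop 0)).and
    (eventually_ge_atTop ⌈‖a0‖ ^ 2 / η⌉₊)).exists
  have hN3' : ‖a0‖ ^ 2 / η ≤ N := Nat.ceil_le.1 hN3
  rw [div_le_iff₀ hη0] at hN3'
  have hc0s := hN1 c0 (by simp)
  set z : ℕ → ℕ → A := fun j j' => τ (t j) a0 * star (τ (t j') a0) with hz
  have hzω : ∀ j j', j ≠ j' → ‖ω (z j j')‖ ≤ η := by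
    intro j j' hjj
    rw [hz, htr]
    rcases lt_or_gt_of_ne hjj with h | h
    · have := rn_star ω hpos (star (τ (t j) a0) * τ (t j') a0)
      simp only [star_mul, star_star] at this
      rw [this, norm_star]
      exact ht1 j j' h a0 (by simp)
    · exact ht1 j' j h a0 (by simp)
  -- choose the sequence `s`
  obtain ⟨s, -, hs2⟩ := rn_ergodic ω hpos hone τ hWM
    (insert b0 ((Finset.range N ×ˢ Finset.range N).image
      fun p => z p.1 p.2 - ω (z p.1 p.2) • 1))
    (by intro y hy
        rw [Finset.mem_insert, Finset.mem_image] at hy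
        rcases hy with rfl | ⟨p, -, rfl⟩ <;> exact cen _) η hη0
  obtain ⟨M, hM1, hM2⟩ := (hs2.and (eventually_gt_atTop 0)).exists
  have hb0s := hM1 b0 (by simp)
  have hM0 : (0 : ℝ) < M := by exact_mod_cast hM2
  have hN0 : (0 : ℝ) < N := by exact_mod_cast hN2
  refine ⟨s, t, M, N, hM2, hN2, fun g h => ?_⟩
  -- first term
  have hS1 : ‖∑ i ∈ Finset.range M, ∑ j ∈ Finset.range N,
      ω (τ (g * s i * (h * t j)) a0 * τ (g * s i) b * τ (h * t j) c * d)‖ ≤ M * N * (K * θ) := by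
    have hb := rn_box ω hpos hone htr τ hmul (fun i => g * s i) (fun j => h * t j) M N a0 b c d
      (2 * η) (by positivity) (by
        intro j hj j' hj' hjj
        have e : ∑ i ∈ Finset.range M, τ (g * s i) (τ (h * t j) a0 * star (τ (h * t j') a0))
            = τ (g * h) (∑ i ∈ Finset.range M, τ (s i) (z j j')) := by
          rw [map_sum]
          refine Finset.sum_congr rfl fun i _ => ?_
          rw [hz]
          simp only [map_mul, map_star, hmul]
          rw [mul_mul_mul_comm g (s i) h (t j), mul_mul_mul_comm g (s i) h (t j')]
        rw [e]
        refine rn_small_tau ω τ hτ1 hmul hinv _ _ (by positivity) ?_ _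
        intro X
        have h1 := hM1 (z j j' - ω (z j j') • 1) (by
          refine Finset.mem_insert_of_mem (Finset.mem_image.2 ⟨(j, j'), ?_, rfl⟩)
          simp [hj, hj']) X
        have e2 : ω (X * ∑ i ∈ Finset.range M, τ (s i) (z j j'))
            = ω (X * ∑ i ∈ Finset.range M, τ (s i) (z j j' - ω (z j j') • 1))
              + M * ω (z j j') * ω X := by
          simp only [map_sub, map_smul, map_one, Finset.sum_sub_distrib, mul_sub, Finset.sum_const,
            Finset.card_range]
          have e3 : ω (X * (M : A)) = M * ω X := by
            rw [← nsmul_eq_mul', map_nsmul, nsmul_eq_mul]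
          simp
          rw [e3]
          ring
        rw [e2]
        refine (norm_add_le _ _).trans ?_
        have h2 := hzω j j' hjj
        have h3 := rn_norm ω hpos hone X
        have h4 : ‖(M : ℂ) * ω (z j j') * ω X‖ ≤ M * η * ‖X‖ := by
          rw [norm_mul, norm_mul, Complex.norm_natCast]
          gcongr
        linarith)
    refine (abs_le_of_sq_le_sq' (hb.trans ?_) (by positivity)).2
    have h5 : (N : ℝ) * ‖a0‖ ^ 2 ≤ N * (N * η) := mul_le_mul_of_nonneg_left hN3' hN0.le
    have h6 : (N : ℝ) * ‖a0‖ ^ 2 + N ^ 2 * (2 * η) ≤ N ^ 2 * θ ^ 2 := by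
      have : θ ^ 2 = 3 * η := by rw [hη]; ring
      rw [this]; nlinarith
    calc _ ≤ (M : ℝ) ^ 2 * K ^ 2 * (N ^ 2 * θ ^ 2) := by gcongr
      _ = _ := by ring
  -- second term
  have hS2 : ‖∑ i ∈ Finset.range M, ∑ j ∈ Finset.range N,
      ω (τ (g * s i) b0 * τ (h * t j) c * d)‖ ≤ M * N * (‖c‖ * ‖d‖ * η) := by
    have e : ∀ j, ∑ i ∈ Finset.range M, ω (τ (g * s i) b0 * τ (h * t j) c * d)
        = ω (τ (h * t j) c * d * τ g (∑ i ∈ Finset.range M, τ (s i) b0)) := by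
      intro j
      rw [map_sum, Finset.mul_sum, map_sum]
      refine Finset.sum_congr rfl fun i _ => ?_
      rw [hmul, mul_assoc, htr]
    rw [Finset.sum_comm]
    simp_rw [e]
    calc _ ≤ ∑ j ∈ Finset.range N, ‖c‖ * ‖d‖ * (M * η) := by
          refine norm_sum_le_of_le _ fun j _ => ?_
          refine (rn_small_tau ω τ hτ1 hmul hinv _ _ (by positivity) hb0s g _).trans ?_
          gcongr
          refine (norm_mul_le _ _).trans ?_
          gcongr
          exact rn_tau_norm _ _
      _ = _ := by simp; ring
  -- third term
  have hS3 : ‖∑ j ∈ Finset.range N, ω (τ (h * t j) c0 * d)‖ ≤ N * (‖d‖ * η) := by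
    have e : ∑ j ∈ Finset.range N, ω (τ (h * t j) c0 * d)
        = ω (d * τ h (∑ i ∈ Finset.range N, τ (t i) c0)) := by
      rw [map_sum, Finset.mul_sum, map_sum]
      refine Finset.sum_congr rfl fun i _ => ?_
      rw [hmul, htr]
    rw [e]
    refine (rn_small_tau ω τ hτ1 hmul hinv _ _ (by positivity) hc0s h _).trans ?_
    linarith
  have dec : ∀ g h : G, ω (τ (g * h) a * τ g b * τ h c * d) =
      ω (τ (g * h) a0 * τ g b * τ h c * d) + ω a * ω (τ g b0 * τ h c * d)
        + ω a * ω b * ω (τ h c0 * d) + ω a * ω b * ω c * ω d := by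
    intro g h
    simp only [ha0, hb0, hc0, map_sub, map_smul, map_one, sub_mul, smul_mul_assoc, one_mul,
      smul_eq_mul]
    ring
  simp_rw [dec, Finset.sum_add_distrib, ← Finset.mul_sum]
  simp only [Finset.sum_const, Finset.card_range, nsmul_eq_mul]
  set S1 := ∑ i ∈ Finset.range M, ∑ j ∈ Finset.range N,
      ω (τ (g * s i * (h * t j)) a0 * τ (g * s i) b * τ (h * t j) c * d)
  set S2 := ∑ i ∈ Finset.range M, ∑ j ∈ Finset.range N,
      ω (τ (g * s i) b0 * τ (h * t j) c * d)
  set S3 := ∑ j ∈ Finset.range N, ω (τ (h * t j) c0 * d)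
  have e : ∀ x : ℂ, x = S1 + ω a * S2 + M * (ω a * ω b * S3) → 
      ‖x‖ < M * N * ε := by
    rintro x rfl
    calc _ ≤ ‖S1‖ + ‖ω a * S2‖ + ‖M * (ω a * ω b * S3)‖ := norm_add₃_le
      _ = ‖S1‖ + ‖ω a‖ * ‖S2‖ + M * (‖ω a * ω b‖ * ‖S3‖) := by
        rw [norm_mul (ω a) S2, norm_mul (M : ℂ), Complex.norm_natCast, norm_mul _ S3]
      _ ≤ M * N * (K * θ) + ‖ω a‖ * (M * N * (‖c‖ * ‖d‖ * θ))
          + M * (‖ω a * ω b‖ * (N * (‖d‖ * θ))) := by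
        gcongr
        · exact hS2.trans (by gcongr)
        · exact hS3.trans (by gcongr)
      _ = M * N * (θ * K') := by rw [hK']; ring
      _ < M * N * ε := by gcongr
  apply e
  ring

end

theorem rn_folner {G : Type*} [CommGroup G] [MeasurableSpace G] (μ : Measure G)
    (hRight : ∀ (V : Set G) (g : G), MeasurableSet V → μ (V * {g}) = μ V)
    (Λ : ℕ → Set G) (hmeas : ∀ n, MeasurableSet (Λ n))
    (hfin : ∀ᶠ n in atTop, 0 < μ (Λ n) ∧ μ (Λ n) < ⊤)
    (hfol : ∀ g : G, Tendsto
      (fun n => (μ (symmDiff (Λ n) (Λ n * {g}))).toReal / (μ (Λ n)).toReal)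
      atTop (𝓝 0))
    (s : ℕ → G) (M : ℕ) :
    ∀ᶠ n in atTop, ∃ g, ∀ i < M, g * s i ∈ Λ n := by
  have h1 : ∀ᶠ n in atTop, ∀ i ∈ Finset.range M,
      (μ (symmDiff (Λ n) (Λ n * {(s i)⁻¹}))).toReal / (μ (Λ n)).toReal < 1 / (M + 1) := by
    rw [Filter.eventually_all_finset]
    intro i _
    exact (hfol (s i)⁻¹).eventually (gt_mem_nhds (by positivity))
  filter_upwards [h1, hfin] with n hn hf
  by_contra! hcon
  have hpos : 0 < (μ (Λ n)).toReal := ENNReal.toReal_pos hf.1.ne' hf.2.ne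
  have hsub : Λ n ⊆ ⋃ i ∈ Finset.range M, symmDiff (Λ n) (Λ n * {(s i)⁻¹}) := by
    intro g hg
    obtain ⟨i, hi, hgi⟩ := hcon g
    refine Set.mem_iUnion₂.2 ⟨i, Finset.mem_range.2 hi, Or.inl ⟨hg, ?_⟩⟩
    intro hmem
    rw [Set.mem_mul] at hmem
    obtain ⟨x, hx, y, hy, rfl⟩ := hmem
    rw [Set.mem_singleton_iff] at hy
    subst hy
    apply hgi
    simpa using hx
  have hfs : ∀ i, μ (symmDiff (Λ n) (Λ n * {(s i)⁻¹})) ≠ ⊤ := by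
    intro i
    refine ne_top_of_le_ne_top (b := μ (Λ n) + μ (Λ n * {(s i)⁻¹})) ?_ ?_
    · rw [hRight _ _ (hmeas n)]
      exact ENNReal.add_ne_top.2 ⟨hf.2.ne, hf.2.ne⟩
    · refine (measure_mono ?_).trans (measure_union_le _ _)
      exact symmDiff_le_sup
  have h2 : μ (Λ n) ≤ ∑ i ∈ Finset.range M, μ (symmDiff (Λ n) (Λ n * {(s i)⁻¹})) :=
    (measure_mono hsub).trans (measure_biUnion_finset_le _ _)
  have h3 := ENNReal.toReal_mono (ENNReal.sum_ne_top.2 fun i _ => hfs i) h2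
  rw [ENNReal.toReal_sum fun i _ => hfs i] at h3
  have h4 : ∑ i ∈ Finset.range M, (μ (symmDiff (Λ n) (Λ n * {(s i)⁻¹}))).toReal
      ≤ ∑ i ∈ Finset.range M, 1 / (M + 1) * (μ (Λ n)).toReal := by
    refine Finset.sum_le_sum fun i hi => ?_
    have := hn i hi
    rw [div_lt_iff₀ hpos] at this
    exact this.le
  rw [Finset.sum_const, Finset.card_range, nsmul_eq_mul] at h4
  have h5 := h3.trans h4
  have h6 : (M : ℝ) * (1 / (M + 1) * (μ (Λ n)).toReal) < (μ (Λ n)).toReal := by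
    rw [← mul_assoc, mul_one_div]
    refine mul_lt_of_lt_one_left hpos ?_
    rw [div_lt_one (by positivity)]
    linarith
  linarith

theorem rn_wm {A : Type*} [NormedRing A] [StarRing A] [CStarRing A] [NormedAlgebra ℂ A]
    [CompleteSpace A] [StarModule ℂ A]
    (ω : A →ₗ[ℂ] ℂ) (hpos : ∀ a : A, 0 ≤ ω (star a * a)) (hone : ω 1 = 1)
    {G : Type*} [MeasurableSpace G] (μ : Measure G) (τ : G → A ≃⋆ₐ[ℂ] A)
    (hτ_meas : ∀ a b : A, Measurable fun g : G => ω (a * τ g b))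
    (Λ : ℕ → Set G)
    (hfin : ∀ᶠ n in atTop, 0 < μ (Λ n) ∧ μ (Λ n) < ⊤)
    (hlim : ∀ a b : A, Tendsto
        (fun n => (μ (Λ n)).toReal⁻¹ * ∫ g in Λ n, ‖ω (a * τ g b) - ω a * ω b‖ ∂μ)
        atTop (𝓝 0))
    (Q : Finset (A × A)) (δ : ℝ) (hδ : 0 < δ) :
    ∃ g, ∀ q ∈ Q, ‖ω (q.1 * τ g q.2) - ω q.1 * ω q.2‖ < δ := by
  have hsum : Tendsto (fun n => ∑ q ∈ Q, (μ (Λ n)).toReal⁻¹ *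
      ∫ g in Λ n, ‖ω (q.1 * τ g q.2) - ω q.1 * ω q.2‖ ∂μ) atTop (𝓝 0) := by
    have := tendsto_finsetSum Q (fun q _ => hlim q.1 q.2)
    simpa using this
  obtain ⟨n, hn, hf⟩ := ((hsum.eventually (gt_mem_nhds hδ)).and hfin).exists
  have hμ : 0 < (μ (Λ n)).toReal := ENNReal.toReal_pos hf.1.ne' hf.2.ne
  have : IsFiniteMeasure (μ.restrict (Λ n)) := ⟨by simpa using hf.2⟩
  have hint : ∀ q : A × A, Integrable (fun g => ‖ω (q.1 * τ g q.2) - ω q.1 * ω q.2‖)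
      (μ.restrict (Λ n)) := by
    intro q
    refine Integrable.of_bound (C := ‖q.1‖ * ‖q.2‖ + ‖ω q.1 * ω q.2‖)
      ((hτ_meas q.1 q.2).sub_const _).norm.aestronglyMeasurable (ae_of_all _ fun g => ?_)
    rw [norm_norm]
    refine (norm_sub_le _ _).trans ?_
    gcongr
    refine (rn_mul_norm ω hpos hone _ _).trans ?_
    gcongr
    exact rn_tau_norm _ _
  rw [← Finset.mul_sum, ← integral_finsetSum _ fun q _ => hint q] at hn
  by_contra! hcon
  have hge : ∀ g, δ ≤ ∑ q ∈ Q, ‖ω (q.1 * τ g q.2) - ω q.1 * ω q.2‖ := by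
    intro g
    obtain ⟨q, hq, h⟩ := hcon g
    exact h.trans (Finset.single_le_sum
      (f := fun q : A × A => ‖ω (q.1 * τ g q.2) - ω q.1 * ω q.2‖) (fun _ _ => norm_nonneg _) hq)
  have h1 := integral_mono (μ := μ.restrict (Λ n)) (integrable_const δ)
    (integrable_finsetSum Q fun q _ => hint q) hge
  rw [integral_const, smul_eq_mul, measureReal_restrict_apply_univ] at h1
  rw [inv_mul_lt_iff₀ hμ] at hn
  exact absurd hn (not_lt.2 h1)

/-- **Corollary 5.7(1): the recurrence corollary, non-uniform case.** -/
theorem recurrence_nonuniform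
    -- a unital C*-algebra A
    {A : Type*} [NormedRing A] [StarRing A] [CStarRing A] [NormedAlgebra ℂ A]
    [CompleteSpace A] [StarModule ℂ A]
    -- a tracial state ω on A
    (ω : A →ₗ[ℂ] ℂ) (hω_pos : ∀ a : A, 0 ≤ ω (star a * a)) (hω_one : ω 1 = 1)
    (hω_tracial : ∀ a b : A, ω (a * b) = ω (b * a))
    -- a second countable topological abelian group G with a σ-finite, right and left
    -- invariant measure μ on its Borel σ-algebra, with the inverse map μ-invariant
    {G : Type*} [CommGroup G] [TopologicalSpace G] [IsTopologicalGroup G]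
    [SecondCountableTopology G] [MeasurableSpace G] [BorelSpace G]
    (μ : Measure G) [SigmaFinite μ]
    (hRight : ∀ (V : Set G) (g : G), MeasurableSet V → μ (V * {g}) = μ V)
    (hLeft : ∀ (V : Set G) (g : G), MeasurableSet V → μ ({g} * V) = μ V)
    (hInvInv : ∀ V : Set G, MeasurableSet V → μ V⁻¹ = μ V)
    -- the action τ, making (A, ω, τ, G) a C*-dynamical system
    (τ : G → A ≃⋆ₐ[ℂ] A)
    (hτ_one : ∀ a : A, τ 1 a = a)
    (hτ_mul : ∀ g h a, τ g (τ h a) = τ (g * h) a)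
    (hω_inv : ∀ g a, ω (τ g a) = ω a)
    (hτ_meas : ∀ a b : A, Measurable fun g : G => ω (a * τ g b))
    -- the system is weakly mixing (w.r.t. some, equivalently every, Følner sequence in G)
    (hWM : ∃ Λ : ℕ → Set G, (∀ n, MeasurableSet (Λ n)) ∧
      (∀ᶠ n in atTop, 0 < μ (Λ n) ∧ μ (Λ n) < ⊤) ∧
      (∀ g : G, Tendsto
        (fun n => (μ (symmDiff (Λ n) (Λ n * {g}))).toReal / (μ (Λ n)).toReal)
        atTop (𝓝 0)) ∧
      ∀ a b : A, Tendsto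
        (fun n => (μ (Λ n)).toReal⁻¹ * ∫ g in Λ n, ‖ω (a * τ g b) - ω a * ω b‖ ∂μ)
        atTop (𝓝 0))
    -- (g,h,j,k) ↦ ω(τ_h(a₁) τ_g(a₂) τ_{gh}(a₃) τ_{jk}(a₄) τ_j(a₅) τ_k(a₆)) is
    -- Σ² × Σ²-measurable
    (hmeas6 : ∀ a₁ a₂ a₃ a₄ a₅ a₆ : A, Measurable fun q : (G × G) × (G × G) =>
      ω (τ q.1.2 a₁ * τ q.1.1 a₂ * τ (q.1.1 * q.1.2) a₃ *
        τ (q.2.1 * q.2.2) a₄ * τ q.2.1 a₅ * τ q.2.2 a₆))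
    -- a uniform Følner sequence (Λ1 n) in G ...
    (Λ1 : ℕ → Set G)
    (hΛ1meas : ∀ n, MeasurableSet (Λ1 n))
    (hΛ1fin : ∀ᶠ n in atTop, 0 < μ (Λ1 n) ∧ μ (Λ1 n) < ⊤)
    (hΛ1folner : ∀ g : G, Tendsto
      (fun n => (μ (symmDiff (Λ1 n) (Λ1 n * {g}))).toReal / (μ (Λ1 n)).toReal)
      atTop (𝓝 0))
    (hΛ1unif : ∀ᶠ m in atTop, ∀ ε > (0 : ℝ), ∀ᶠ n in atTop, ∀ g ∈ Λ1 m,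
      (μ (symmDiff (Λ1 n) (Λ1 n * {g}))).toReal ≤ ε * (μ (Λ1 n)).toReal)
    -- ... satisfying the Tempel'man condition ...
    (hΛ1temp : ∃ c : ℝ, 0 < c ∧ ∀ᶠ n in atTop, MeasurableSet ((Λ1 n)⁻¹ * Λ1 n) ∧
      μ ((Λ1 n)⁻¹ * Λ1 n) ≤ ENNReal.ofReal c * μ (Λ1 n))
    -- ... and such that (Λ1 n⁻¹ Λ1 n) is also Følner in G
    (hΛ1invfin : ∀ᶠ n in atTop, 0 < μ ((Λ1 n)⁻¹ * Λ1 n) ∧ μ ((Λ1 n)⁻¹ * Λ1 n) < ⊤)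
    (hΛ1invfolner : ∀ g : G, Tendsto
      (fun n => (μ (symmDiff ((Λ1 n)⁻¹ * Λ1 n) (((Λ1 n)⁻¹ * Λ1 n) * {g}))).toReal /
        (μ ((Λ1 n)⁻¹ * Λ1 n)).toReal)
      atTop (𝓝 0))
    -- a uniform Følner sequence (Λ2 n) in G ...
    (Λ2 : ℕ → Set G)
    (hΛ2meas : ∀ n, MeasurableSet (Λ2 n))
    (hΛ2fin : ∀ᶠ n in atTop, 0 < μ (Λ2 n) ∧ μ (Λ2 n) < ⊤)
    (hΛ2folner : ∀ g : G, Tendsto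
      (fun n => (μ (symmDiff (Λ2 n) (Λ2 n * {g}))).toReal / (μ (Λ2 n)).toReal)
      atTop (𝓝 0))
    (hΛ2unif : ∀ᶠ m in atTop, ∀ ε > (0 : ℝ), ∀ᶠ n in atTop, ∀ g ∈ Λ2 m,
      (μ (symmDiff (Λ2 n) (Λ2 n * {g}))).toReal ≤ ε * (μ (Λ2 n)).toReal)
    -- ... satisfying the Tempel'man condition ...
    (hΛ2temp : ∃ c : ℝ, 0 < c ∧ ∀ᶠ n in atTop, MeasurableSet ((Λ2 n)⁻¹ * Λ2 n) ∧
      μ ((Λ2 n)⁻¹ * Λ2 n) ≤ ENNReal.ofReal c * μ (Λ2 n))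
    -- ... and such that (Λ2 n⁻¹ Λ2 n) is also Følner in G
    (hΛ2invfin : ∀ᶠ n in atTop, 0 < μ ((Λ2 n)⁻¹ * Λ2 n) ∧ μ ((Λ2 n)⁻¹ * Λ2 n) < ⊤)
    (hΛ2invfolner : ∀ g : G, Tendsto
      (fun n => (μ (symmDiff ((Λ2 n)⁻¹ * Λ2 n) (((Λ2 n)⁻¹ * Λ2 n) * {g}))).toReal /
        (μ ((Λ2 n)⁻¹ * Λ2 n)).toReal)
      atTop (𝓝 0))
    -- the system is asymptotically abelian with respect to (Λ1 n)
    (hcomm_meas : ∀ a b : A, Measurable fun g : G => ‖a * τ g b - τ g b * a‖)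
    (hAA : ∀ a b : A, Tendsto
      (fun n => (μ (Λ1 n)).toReal⁻¹ * ∫ g in Λ1 n, ‖a * τ g b - τ g b * a‖ ∂μ)
      atTop (𝓝 0))
 :
    -- conclusion
    ∀ ε > (0 : ℝ), ∀ a b c d : A, ∃ n₀ : ℕ, ∀ n > n₀, ∃ g ∈ Λ2 n, ∃ h ∈ Λ1 n,
      ‖ω (τ (g * h) a * τ g b * τ h c * d)‖ > ‖ω a * ω b * ω c * ω d‖ - ε := by
  intro ε hε a b c d
  obtain ⟨Λ, -, hΛfin, -, hΛlim⟩ := hWM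
  obtain ⟨s, t, M, N, hM, hN, hest⟩ := rn_main_est ω hω_pos hω_one hω_tracial τ hτ_one hτ_mul hω_inv
    (rn_wm ω hω_pos hω_one μ τ hτ_meas Λ hΛfin hΛlim) a b c d ε hε
  have h2 := rn_folner μ hRight Λ2 hΛ2meas hΛ2fin hΛ2folner s M
  have h1 := rn_folner μ hRight Λ1 hΛ1meas hΛ1fin hΛ1folner t N
  obtain ⟨n₀, hn₀⟩ := eventually_atTop.1 (h2.and h1)
  refine ⟨n₀, fun n hn => ?_⟩
  obtain ⟨⟨g, hg⟩, ⟨h, hh⟩⟩ := hn₀ n hn.le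
  by_contra! hcon
  have hb : ‖∑ i ∈ Finset.range M, ∑ j ∈ Finset.range N,
      ω (τ (g * s i * (h * t j)) a * τ (g * s i) b * τ (h * t j) c * d)‖
      ≤ ∑ i ∈ Finset.range M, ∑ j ∈ Finset.range N, (‖ω a * ω b * ω c * ω d‖ - ε) := by
    refine norm_sum_le_of_le _ fun i hi => norm_sum_le_of_le _ fun j hj => ?_
    exact hcon _ (hg i (Finset.mem_range.1 hi)) _ (hh j (Finset.mem_range.1 hj))
  simp only [Finset.sum_const, Finset.card_range, nsmul_eq_mul] at hb
  have h3 := hest g h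
  rw [norm_sub_rev] at h3
  have h4 := norm_sub_norm_le ((M : ℂ) * N * (ω a * ω b * ω c * ω d))
    (∑ i ∈ Finset.range M, ∑ j ∈ Finset.range N,
      ω (τ (g * s i * (h * t j)) a * τ (g * s i) b * τ (h * t j) c * d))
  rw [norm_mul, norm_mul, Complex.norm_natCast, Complex.norm_natCast] at h4
  linarith
end

section
/- (relatively dense recurrence) Let (A,ω,τ,G) be a weakly mixing C*-dynamical system with ω tracial, where G is a countable second countable topological group, Σ its Borel σ-algebra, μ the counting measure, and (g,h,j,k) ↦ ω(τ_h(a₁) τ_g(a₂) τ_{gh}(a₃) τ_{jk}(a₄) τ_j(a₅) τ_k(a₆)) is Σ² × Σ²-measurable for all a₁,...,a₆ ∈ A. Assume uniform Følner sequences (Λ_{1,n}) and (Λ_{2,n}) in G satisfying the Tempel'man condition with (Λ_{1,n}⁻¹Λ_{1,n}) and (Λ_{2,n}⁻¹Λ_{2,n}) also Følner in G, and that (A,ω,τ,G) is uniformly asymptotically abelian with respect to (Λ_{1,n}). Then for any ε > 0 and any a, b, c, d ∈ A there is an n ∈ ℕ such that for every g₁, g₂ ∈ G there exist g ∈ Λ_{2,n}g₂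 and h ∈ Λ_{1,n}g₁ with |ω(τ_{gh}(a) τ_g(b) τ_h(c) d)| > |ω(a)ω(b)ω(c)ω(d)| − ε; in particular, the set of pairs (g,h) for which this inequality holds is relatively dense in G × G (i.e. F·E = G × G for some finite set F ⊆ G × G, where E is the set of such pairs). -/
open MeasureTheory Filter Topology
open scoped Pointwise ComplexOrder

namespace RecAux

universe u v

lemma herm {A : Type u} [Ring A] [StarRing A] [Algebra ℂ A] [StarModule ℂ A]
    (ω : A →ₗ[ℂ] ℂ) (hpos : ∀ a : A, 0 ≤ ω (star a * a)) (x : A) :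
    ω (star x) = (starRingEnd ℂ) (ω x) := by
  have him : ∀ a, (ω (star a * a)).im = 0 := fun a => ((Complex.le_def.1 (hpos a)).2).symm
  have h1 := him (1 + x)
  have h2 := him (1 + Complex.I • x)
  have h0 := him 1
  have hx := him x
  simp only [star_add, star_one, star_smul, add_mul, mul_add, one_mul, mul_one, map_add, map_smul,
    smul_mul_assoc, mul_smul_comm, smul_eq_mul, Complex.add_im, Complex.mul_im, Complex.mul_re,
    Complex.star_def, Complex.conj_I, Complex.neg_im, Complex.neg_re, Complex.I_re, Complex.I_im] at h0 h1 h2 hx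
  apply Complex.ext <;> simp <;> linarith

lemma gns {A : Type u} [Ring A] [StarRing A] [Algebra ℂ A] [StarModule ℂ A]
    (ω : A →ₗ[ℂ] ℂ) (hpos : ∀ a : A, 0 ≤ ω (star a * a)) :
    ∃ (H : Type u) (_ : SeminormedAddCommGroup H) (_ : InnerProductSpace ℂ H) (ι : A →ₗ[ℂ] H),
      ∀ x y, inner ℂ (ι x) (ι y) = ω (star x * y) := by
  let c : PreInnerProductSpace.Core ℂ A :=
    { inner := fun a b => ω (star a * b)
      conj_inner_symm := fun x y => by
        rw [← herm ω hpos]; simp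
      re_inner_nonneg := fun x => (Complex.le_def.1 (hpos x)).1
      add_left := fun x y z => by simp [add_mul]
      smul_left := fun x y r => by simp }
  exact ⟨A, InnerProductSpace.Core.toSeminormedAddCommGroup (c := c), InnerProductSpace.ofCore c,
    { toFun := fun x => x, map_add' := fun _ _ => rfl, map_smul' := fun _ _ => rfl },
    fun _ _ => rfl⟩

structure Sys {A : Type u} [Ring A] [StarRing A] [Algebra ℂ A] [StarModule ℂ A]
    {G : Type v} [CommGroup G] {H : Type u} [SeminormedAddCommGroup H] [InnerProductSpace ℂ H]
    (ω : A →ₗ[ℂ] ℂ) (τ : G → A ≃⋆ₐ[ℂ] A) (ι : A →ₗ[ℂ] H) : Prop where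
  one : ω 1 = 1
  tr : ∀ a b, ω (a * b) = ω (b * a)
  mul : ∀ g h a, τ g (τ h a) = τ (g * h) a
  inv : ∀ g a, ω (τ g a) = ω a
  inn : ∀ x y, inner ℂ (ι x) (ι y) = ω (star x * y)
  wm : ∀ a, ω a = 0 → ∀ δ > (0 : ℝ), ∀ s : Finset G, ∃ y, ∀ x ∈ s,
    ‖ω (star (τ x a) * τ y a)‖ ≤ δ

open Classical in
/-- A Folner sequence of finite sets. -/
def Fol {G : Type v} [CommGroup G] (S : ℕ → Finset G) : Prop :=
  (∀ᶠ n in atTop, (S n).Nonempty) ∧ ∀ k, ∀ δ > (0 : ℝ), ∀ᶠ n in atTop,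
    ((symmDiff (S n) ((S n).image (· * k))).card : ℝ) ≤ δ * (S n).card

section
variable {A : Type u} [Ring A] [StarRing A] [Algebra ℂ A] [StarModule ℂ A]
    {G : Type v} [CommGroup G] {H : Type u} [SeminormedAddCommGroup H] [InnerProductSpace ℂ H]
    {ω : A →ₗ[ℂ] ℂ} {τ : G → A ≃⋆ₐ[ℂ] A} {ι : A →ₗ[ℂ] H}

lemma nsq (hS : Sys ω τ ι) (x : A) : ((‖ι x‖ ^ 2 : ℝ) : ℂ) = ω (star x * x) := by
  rw [← hS.inn, inner_self_eq_norm_sq_to_K]; simp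

lemma norm_of_eq (hS : Sys ω τ ι) {x y : A} (h : ω (star x * x) = ω (star y * y)) :
    ‖ι x‖ = ‖ι y‖ := by
  rw [← nsq hS, ← nsq hS] at h
  have h' : ‖ι x‖ ^ 2 = ‖ι y‖ ^ 2 := by exact_mod_cast h
  exact (sq_eq_sq₀ (norm_nonneg _) (norm_nonneg _)).1 h'

lemma norm_tau (hS : Sys ω τ ι) (g : G) (x : A) : ‖ι (τ g x)‖ = ‖ι x‖ := by
  apply norm_of_eq hS
  rw [← map_star, ← map_mul, hS.inv]

lemma norm_star' (hS : Sys ω τ ι) (x : A) : ‖ι (star x)‖ = ‖ι x‖ := by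
  apply norm_of_eq hS
  rw [star_star, hS.tr]

lemma cs (hS : Sys ω τ ι) (x y : A) : ‖ω (x * y)‖ ≤ ‖ι x‖ * ‖ι y‖ := by
  have := norm_inner_le_norm (𝕜 := ℂ) (ι (star x)) (ι y)
  rwa [hS.inn, star_star, norm_star' hS] at this

lemma mulbd (hS : Sys ω τ ι) (x y : A) : ∃ C : ℝ, 0 ≤ C ∧ ∀ h, ‖ι (τ h x * y)‖ ≤ C := by
  refine ⟨Real.sqrt (‖ι (star x * x)‖ * ‖ι (y * star y)‖), Real.sqrt_nonneg _, fun h => ?_⟩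
  apply Real.le_sqrt_of_sq_le
  have h1 := nsq hS (τ h x * y)
  have h2 : ω (star (τ h x * y) * (τ h x * y)) = ω (τ h (star x * x) * (y * star y)) := by
    rw [map_mul (τ h), map_star (τ h), star_mul]
    simp only [mul_assoc]
    rw [hS.tr]
    simp only [mul_assoc]
  rw [h2] at h1
  have h3 := cs hS (τ h (star x * x)) (y * star y)
  rw [← h1, norm_tau hS, Complex.norm_real] at h3
  exact (le_abs_self _).trans h3

lemma sum_shift (S T : Finset G) [DecidableEq G] (f : G → H) (M : ℝ) (hf : ∀ g, ‖f g‖ ≤ M) :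
    ‖∑ g ∈ S, f g - ∑ g ∈ T, f g‖ ≤ (symmDiff S T).card * M := by
  rw [← Finset.sum_sdiff_sub_sum_sdiff]
  have h : ∀ R : Finset G, ‖∑ g ∈ R, f g‖ ≤ R.card * M := fun R => by
    simpa using norm_sum_le_of_le R (fun g _ => hf g)
  have hc : ((symmDiff S T).card : ℝ) = (S \ T).card + (T \ S).card := by
    rw [symmDiff_def, Finset.sup_eq_union, Finset.card_union_of_disjoint disjoint_sdiff_sdiff]
    push_cast; rfl
  rw [hc, add_mul]
  exact (norm_sub_le _ _).trans (add_le_add (h _) (h _))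

open Classical in
lemma smooth (hS : Sys ω τ ι) (S : Finset G) (N : ℕ) (hN : 0 < N) (k : ℕ → G) (δ : ℝ)
    (h : ∀ i ∈ Finset.range N, ((symmDiff S (S.image (· * k i))).card : ℝ) ≤ δ * S.card)
    (y : A) (g₂ : G) :
    ‖ι (∑ g ∈ S, τ (g * g₂) y)‖ ≤
      S.card * (‖ι (∑ i ∈ Finset.range N, τ (k i) y)‖ / N + δ * ‖ι y‖) := by
  have e1 : ∑ g ∈ S, τ (g * g₂) y = τ g₂ (∑ g ∈ S, τ g y) := by
    rw [map_sum]
    exact Finset.sum_congr rfl fun g _ => by rw [hS.mul, mul_comm]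
  rw [e1, norm_tau hS, map_sum]
  have e2 : ∀ i ∈ Finset.range N,
      ‖∑ g ∈ S, ι (τ g y) - ∑ g ∈ S, ι (τ g (τ (k i) y))‖ ≤ δ * S.card * ‖ι y‖ := by
    intro i hi
    have h1 := sum_shift S (S.image (· * k i)) (fun g => ι (τ g y)) ‖ι y‖
      (fun g => (norm_tau hS g y).le)
    rw [Finset.sum_image (fun a _ b _ hab => mul_right_cancel hab)] at h1
    simp only [← hS.mul] at h1
    exact h1.trans (mul_le_mul_of_nonneg_right (h i hi) (norm_nonneg _))
  have e3 : ‖∑ i ∈ Finset.range N, ∑ g ∈ S, ι (τ g (τ (k i) y))‖ ≤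
      S.card * ‖ι (∑ i ∈ Finset.range N, τ (k i) y)‖ := by
    rw [Finset.sum_comm]
    have := norm_sum_le_of_le S (f := fun g => ∑ i ∈ Finset.range N, ι (τ g (τ (k i) y)))
      (n := fun _ => ‖ι (∑ i ∈ Finset.range N, τ (k i) y)‖) (fun g _ => by
        rw [← map_sum, ← map_sum, norm_tau hS])
    simpa using this
  have e4 := norm_sum_le_of_le _ e2
  rw [Finset.sum_sub_distrib] at e4
  simp only [Finset.sum_const, Finset.card_range] at e4
  have e5 : ‖N • ∑ g ∈ S, ι (τ g y)‖ = N * ‖∑ g ∈ S, ι (τ g y)‖ := by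
    rw [← Nat.cast_smul_eq_nsmul ℂ, norm_smul]; simp
  have e6 := norm_le_norm_add_norm_sub' (N • ∑ g ∈ S, ι (τ g y))
    (∑ i ∈ Finset.range N, ∑ g ∈ S, ι (τ g (τ (k i) y)))
  rw [e5] at e6
  have hN' : (0 : ℝ) < N := by exact_mod_cast hN
  refine le_of_mul_le_mul_left ?_ hN'
  calc _ ≤ _ := e6
    _ ≤ _ := add_le_add e3 e4
    _ = _ := by rw [nsmul_eq_mul]; field_simp

/-- almost orthogonal sequence -/
lemma exk (hS : Sys ω τ ι) (a : A) (ha : ω a = 0) (δ : ℝ) (hδ : 0 < δ) :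
    ∃ k : ℕ → G, ∀ i j, i ≠ j → ‖ω (star (τ (k i) a) * τ (k j) a)‖ ≤ δ := by
  let r : G → G → Prop := fun x y => ‖ω (star (τ x a) * τ y a)‖ ≤ δ
  have : Std.Symm r := ⟨fun x y h => by
    simp only [r, ← hS.inn] at h ⊢
    rwa [norm_inner_symm]⟩
  obtain ⟨f, -, hf⟩ := exists_seq_of_forall_finset_exists' (fun _ : G => True) r
    (fun s _ => by
      obtain ⟨y, hy⟩ := hS.wm a ha δ hδ s
      exact ⟨y, trivial, hy⟩)
  exact ⟨f, fun i j hij => hf hij⟩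

lemma sq_expand (hS : Sys ω τ ι) (N : ℕ) (x : ℕ → A) :
    ((‖ι (∑ i ∈ Finset.range N, x i)‖ ^ 2 : ℝ) : ℂ) =
      ∑ i ∈ Finset.range N, ∑ j ∈ Finset.range N, ω (star (x i) * x j) := by
  rw [nsq hS, star_sum, Finset.sum_mul, map_sum]
  refine Finset.sum_congr rfl fun i _ => ?_
  rw [Finset.mul_sum, map_sum]

lemma dbl_sum_le (N : ℕ) (f : ℕ → ℕ → ℝ) (D δ : ℝ) (hδ : 0 ≤ δ) (hD : ∀ i, f i i ≤ D)
    (hf : ∀ i j, i ≠ j → f i j ≤ δ) (hD0 : 0 ≤ D) :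
    ∑ i ∈ Finset.range N, ∑ j ∈ Finset.range N, f i j ≤ N * D + N ^ 2 * δ := by
  have h1 : ∀ i ∈ Finset.range N, ∑ j ∈ Finset.range N, f i j ≤ D + N * δ := by
    intro i hi
    calc _ ≤ ∑ j ∈ Finset.range N, ((if i = j then D else 0) + δ) := by
          refine Finset.sum_le_sum fun j _ => ?_
          split_ifs with h
          · subst h; linarith [hD i]
          · linarith [hf i j h]
      _ = _ := by rw [Finset.sum_add_distrib, Finset.sum_ite_eq, if_pos hi]; simp
  refine (Finset.sum_le_sum h1).trans (le_of_eq ?_)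
  simp; ring

/-- choice of N and δ -/
lemma exND (D η : ℝ) (hD : 0 ≤ D) (hη : 0 < η) : ∃ N : ℕ, 0 < N ∧ D ≤ N * η := by
  obtain ⟨N, hN⟩ := exists_nat_ge (D / η)
  refine ⟨N + 1, Nat.succ_pos _, ?_⟩
  rw [div_le_iff₀ hη] at hN
  push_cast; nlinarith

lemma erg (hS : Sys ω τ ι) {S : ℕ → Finset G} (hF : Fol S) (b : A) (hb : ω b = 0)
    (η : ℝ) (hη : 0 < η) : ∀ᶠ n in atTop, ∀ g₁,
      ‖ι (∑ g ∈ S n, τ (g * g₁) b)‖ ≤ η * (S n).card := by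
  classical
  set δ := η ^ 2 / 8 with hδ
  have hδ0 : 0 < δ := by positivity
  obtain ⟨k, hk⟩ := exk hS b hb δ hδ0
  obtain ⟨N, hN, hND⟩ := exND (‖ι b‖ ^ 2) δ (by positivity) hδ0
  have hN' : (0 : ℝ) < N := by exact_mod_cast hN
  set θ := η / (2 * (‖ι b‖ + 1)) with hθ
  have hb0 := norm_nonneg (ι b)
  have hθ0 : 0 < θ := by positivity
  have key : ‖ι (∑ i ∈ Finset.range N, τ (k i) b)‖ / N ≤ η / 2 := by
    rw [div_le_iff₀ hN']
    refine le_of_sq_le_sq ?_ (by positivity)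
    have h1 := congrArg norm (sq_expand hS N (fun i => τ (k i) b))
    rw [Complex.norm_real, Real.norm_of_nonneg (by positivity)] at h1
    rw [h1]
    refine (norm_sum_le_of_le _ fun i _ => norm_sum_le _ _).trans ?_
    refine (dbl_sum_le N _ (‖ι b‖ ^ 2) δ hδ0.le (fun i => ?_) hk (by positivity)).trans ?_
    · rw [← nsq hS, norm_tau hS, Complex.norm_real, Real.norm_of_nonneg (by positivity)]
    · calc _ ≤ N * (N * δ) + N ^ 2 * δ := by gcongr
        _ = _ := by rw [hδ]; ring
  have hev : ∀ᶠ n in atTop, ∀ i ∈ Finset.range N,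
      ((symmDiff (S n) ((S n).image (· * k i))).card : ℝ) ≤ θ * (S n).card :=
    (Filter.eventually_all_finset _).2 fun i _ => hF.2 (k i) θ hθ0
  filter_upwards [hev] with n hn g₁
  refine (smooth hS (S n) N hN k θ hn b g₁).trans ?_
  rw [mul_comm]
  refine mul_le_mul_of_nonneg_right ?_ (Nat.cast_nonneg _)
  have : θ * ‖ι b‖ ≤ η / 2 := by
    rw [hθ, div_mul_eq_mul_div, div_le_iff₀ (by positivity)]; nlinarith
  linarith

lemma erg2 (hS : Sys ω τ ι) {S : ℕ → Finset G} (hF : Fol S) (z w : A)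
    (η : ℝ) (hη : 0 < η) : ∀ᶠ n in atTop, ∀ g₁,
      ‖∑ g ∈ S n, ω (z * τ (g * g₁) w) - (S n).card * (ω z * ω w)‖ ≤ η * (S n).card := by
  have hz := norm_nonneg (ι z)
  have h0 : ω (w - algebraMap ℂ A (ω w)) = 0 := by
    rw [Algebra.algebraMap_eq_smul_one, map_sub, map_smul, hS.one]; simp
  filter_upwards [erg hS hF (w - algebraMap ℂ A (ω w)) h0 (η / (‖ι z‖ + 1)) (by positivity)]
    with n hn g₁
  have e : ∑ g ∈ S n, ω (z * τ (g * g₁) w) - (S n).card * (ω z * ω w) =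
      ω (z * ∑ g ∈ S n, τ (g * g₁) (w - algebraMap ℂ A (ω w))) := by
    rw [Finset.mul_sum, map_sum]
    have : ∀ g, ω (z * τ (g * g₁) (w - algebraMap ℂ A (ω w))) =
        ω (z * τ (g * g₁) w) - ω z * ω w := fun g => by
      rw [map_sub, Algebra.algebraMap_eq_smul_one, map_smul, map_one, mul_sub, map_sub,
        mul_smul_comm, mul_one, map_smul, smul_eq_mul, mul_comm (ω w)]
    simp only [this, Finset.sum_sub_distrib, Finset.sum_const, nsmul_eq_mul]
  rw [e]
  refine (cs hS _ _).trans ((mul_le_mul_of_nonneg_left (hn g₁) hz).trans ?_)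
  rw [← mul_assoc]
  refine mul_le_mul_of_nonneg_right ?_ (Nat.cast_nonneg _)
  rw [mul_div_assoc', div_le_iff₀ (by positivity)]; nlinarith
lemma ybound (hS : Sys ω τ ι) {S : ℕ → Finset G} (hF : Fol S) (a b : A) (ha : ω a = 0)
    (η : ℝ) (hη : 0 < η) : ∃ N : ℕ, 0 < N ∧ ∃ k : ℕ → G, ∀ᶠ n in atTop, ∀ g₁,
      ∑ h ∈ S n, ‖ι (∑ i ∈ Finset.range N, τ (k i) (τ (h * g₁) a * b))‖ / N ≤ η * (S n).card := by
  have hb0 := norm_nonneg (ι b)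
  set B := ‖ι b‖ * ‖ι b‖ with hB
  have hB0 : 0 ≤ B := by positivity
  set δ := η ^ 2 / (4 * (B + 1)) with hδ
  have hδ0 : 0 < δ := by positivity
  have hBδ : B * δ ≤ η ^ 2 / 4 := by
    rw [hδ, mul_div_assoc', div_le_iff₀ (by positivity)]; nlinarith [sq_nonneg η]
  obtain ⟨k, hk⟩ := exk hS a ha δ hδ0
  obtain ⟨N, hN, hND⟩ := exND (B * ‖ι a‖ ^ 2) (η ^ 2 / 4) (by positivity) (by positivity)
  have hN' : (1 : ℝ) ≤ N := by exact_mod_cast hN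
  refine ⟨N, hN, k, ?_⟩
  let z : ℕ → ℕ → A := fun i j => τ (k j) b * star (τ (k i) b)
  let w : ℕ → ℕ → A := fun i j => star (τ (k i) a) * τ (k j) a
  have hev : ∀ᶠ n in atTop, ∀ i ∈ Finset.range N, ∀ j ∈ Finset.range N, ∀ g₁,
      ‖∑ g ∈ S n, ω (z i j * τ (g * g₁) (w i j)) - (S n).card * (ω (z i j) * ω (w i j))‖
        ≤ (η ^ 2 / 4) * (S n).card :=
    (Filter.eventually_all_finset _).2 fun i _ => (Filter.eventually_all_finset _).2 fun j _ =>
      erg2 hS hF (z i j) (w i j) _ (by positivity)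
  filter_upwards [hev] with n hn g₁
  set s : ℝ := ((S n).card : ℝ) with hs
  have hs0 : 0 ≤ s := Nat.cast_nonneg _
  have hz : ∀ i j, ‖ω (z i j)‖ ≤ B := fun i j => by
    refine (cs hS _ _).trans (le_of_eq ?_)
    rw [norm_star' hS, norm_tau hS, norm_tau hS]
  have hterm : ∀ h i j, ω (star (τ (k i) (τ (h * g₁) a * b)) * τ (k j) (τ (h * g₁) a * b)) =
      ω (z i j * τ (h * g₁) (w i j)) := fun h i j => by
    have e1 : ∀ l, τ (k l) (τ (h * g₁) a * b) = τ (h * g₁) (τ (k l) a) * τ (k l) b := fun l => by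
      rw [map_mul (τ (k l)), hS.mul, hS.mul, mul_comm (k l)]
    rw [e1, e1, star_mul]
    simp only [z, w]
    rw [map_mul (τ (h * g₁)), map_star (τ (h * g₁))]
    simp only [mul_assoc]
    rw [hS.tr (τ (k j) b)]
    simp only [mul_assoc]
  have hsq : ∑ h ∈ S n, ‖ι (∑ i ∈ Finset.range N, τ (k i) (τ (h * g₁) a * b))‖ ^ 2
      ≤ N ^ 2 * s * η ^ 2 := by
    have e1 : ((∑ h ∈ S n, ‖ι (∑ i ∈ Finset.range N, τ (k i) (τ (h * g₁) a * b))‖ ^ 2 : ℝ) : ℂ) =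
        ∑ i ∈ Finset.range N, ∑ j ∈ Finset.range N, ∑ h ∈ S n,
          ω (z i j * τ (h * g₁) (w i j)) := by
      rw [Complex.ofReal_sum]
      simp only [sq_expand hS N (fun i => τ (k i) (τ (_ * g₁) a * b)), hterm]
      rw [Finset.sum_comm]
      exact Finset.sum_congr rfl fun i _ => Finset.sum_comm
    have e2 := congrArg norm e1
    rw [Complex.norm_real, Real.norm_of_nonneg (Finset.sum_nonneg fun _ _ => by positivity)] at e2
    rw [e2]
    have e3 : ∀ i ∈ Finset.range N, ∀ j ∈ Finset.range N,
        ‖∑ h ∈ S n, ω (z i j * τ (h * g₁) (w i j))‖ ≤ s * (B * ‖ω (w i j)‖ + η ^ 2 / 4) := by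
      intro i hi j hj
      have h1 := hn i hi j hj g₁
      have h2 := norm_le_norm_add_norm_sub' (∑ h ∈ S n, ω (z i j * τ (h * g₁) (w i j)))
        ((S n).card * (ω (z i j) * ω (w i j)))
      rw [norm_mul, norm_mul, Complex.norm_natCast] at h2
      have h3 : s * (‖ω (z i j)‖ * ‖ω (w i j)‖) ≤ s * (B * ‖ω (w i j)‖) := by
        gcongr; exact hz i j
      nlinarith
    refine (norm_sum_le_of_le _ fun i hi => norm_sum_le_of_le _ fun j hj => e3 i hi j hj).trans ?_
    refine (dbl_sum_le N _ (s * (B * ‖ι a‖ ^ 2 + η ^ 2 / 4)) (s * (η ^ 2 / 4 + η ^ 2 / 4))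
      (by positivity) (fun i => ?_) (fun i j hij => ?_) (by positivity)).trans ?_
    · have : ‖ω (w i i)‖ = ‖ι a‖ ^ 2 := by
        simp only [w]
        rw [← nsq hS, norm_tau hS, Complex.norm_real, Real.norm_of_nonneg (by positivity)]
      rw [this]
    · have h1 : ‖ω (w i j)‖ ≤ δ := hk i j hij
      have : B * ‖ω (w i j)‖ ≤ B * δ := by gcongr
      gcongr
      linarith
    · calc _ ≤ N * (s * (N * (η ^ 2 / 4) + N * (η ^ 2 / 4))) +
            N ^ 2 * (s * (η ^ 2 / 4 + η ^ 2 / 4)) := by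
            gcongr
            exact le_mul_of_one_le_left (by positivity) hN'
        _ = _ := by ring
  have hN0 : (0 : ℝ) < N := by linarith
  calc _ ≤ ∑ h ∈ S n, (η / 2 +
        ‖ι (∑ i ∈ Finset.range N, τ (k i) (τ (h * g₁) a * b))‖ ^ 2 / (N ^ 2 * (2 * η))) := by
        refine Finset.sum_le_sum fun h _ => ?_
        generalize ‖ι (∑ i ∈ Finset.range N, τ (k i) (τ (h * g₁) a * b))‖ = t
        have : η / 2 + t ^ 2 / (N ^ 2 * (2 * η)) - t / N = (t / N - η) ^ 2 / (2 * η) := by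
          field_simp; ring
        have h2 : 0 ≤ (t / N - η) ^ 2 / (2 * η) := by positivity
        linarith
    _ = s * (η / 2) + (∑ h ∈ S n,
        ‖ι (∑ i ∈ Finset.range N, τ (k i) (τ (h * g₁) a * b))‖ ^ 2) / (N ^ 2 * (2 * η)) := by
        rw [Finset.sum_add_distrib, Finset.sum_div]; simp [hs]
    _ ≤ s * (η / 2) + (N ^ 2 * s * η ^ 2) / (N ^ 2 * (2 * η)) := by gcongr
    _ = _ := by field_simp; ring

/-- The case `ω a = 0`. -/
lemma vdc (hS : Sys ω τ ι) {S T : ℕ → Finset G} (hF : Fol S) (hT : Fol T) (a b c d : A)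
    (ha : ω a = 0) (η : ℝ) (hη : 0 < η) : ∀ᶠ n in atTop, ∀ g₁ g₂,
      ‖∑ h ∈ S n, ∑ g ∈ T n,
        ω (τ (g * g₂ * (h * g₁)) a * τ (g * g₂) b * τ (h * g₁) c * d)‖
        ≤ η * ((S n).card * (T n).card) := by
  classical
  obtain ⟨C, hC0, hC⟩ := mulbd hS c d
  obtain ⟨C', hC0', hC'⟩ := mulbd hS a b
  set θ := η / (2 * (C + 1)) with hθ
  have hθ0 : 0 < θ := by positivity
  obtain ⟨N, hN, k, hk⟩ := ybound hS hF a b ha θ hθ0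
  set δ := θ / (C' + 1) with hδ
  have hδ0 : 0 < δ := by positivity
  have hev : ∀ᶠ n in atTop, ∀ i ∈ Finset.range N,
      ((symmDiff (T n) ((T n).image (· * k i))).card : ℝ) ≤ δ * (T n).card :=
    (Filter.eventually_all_finset _).2 fun i _ => hT.2 (k i) δ hδ0
  filter_upwards [hk, hev] with n hn hm g₁ g₂
  have hδC : δ * C' ≤ θ := by
    rw [hδ, div_mul_eq_mul_div, div_le_iff₀ (by positivity)]; nlinarith
  have hθC : 2 * θ * C ≤ η := by
    rw [hθ, mul_div_assoc', div_mul_eq_mul_div, div_le_iff₀ (by positivity)]; nlinarith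
  set s : ℝ := ((S n).card : ℝ) with hs
  set t : ℝ := ((T n).card : ℝ) with ht
  have hs0 : 0 ≤ s := Nat.cast_nonneg _
  have ht0 : 0 ≤ t := Nat.cast_nonneg _
  have h1 : ∀ h ∈ S n, ‖∑ g ∈ T n,
        ω (τ (g * g₂ * (h * g₁)) a * τ (g * g₂) b * τ (h * g₁) c * d)‖ ≤
      t * C * (‖ι (∑ i ∈ Finset.range N, τ (k i) (τ (h * g₁) a * b))‖ / N + θ) := by
    intro h _
    have e : ∑ g ∈ T n, ω (τ (g * g₂ * (h * g₁)) a * τ (g * g₂) b * τ (h * g₁) c * d) =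
        ω ((∑ g ∈ T n, τ (g * g₂) (τ (h * g₁) a * b)) * (τ (h * g₁) c * d)) := by
      rw [Finset.sum_mul, map_sum]
      refine Finset.sum_congr rfl fun g _ => ?_
      rw [map_mul (τ (g * g₂)), hS.mul]
      simp only [mul_assoc]
    rw [e]
    refine (cs hS _ _).trans ?_
    have e2 := smooth hS (T n) N hN k δ hm (τ (h * g₁) a * b) g₂
    have e3 : δ * ‖ι (τ (h * g₁) a * b)‖ ≤ θ :=
      (mul_le_mul_of_nonneg_left (hC' _) hδ0.le).trans hδC
    calc _ ≤ (t * (‖ι (∑ i ∈ Finset.range N, τ (k i) (τ (h * g₁) a * b))‖ / N + θ)) * C := by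
          refine mul_le_mul (e2.trans ?_) (hC _) (norm_nonneg _) (by positivity)
          gcongr
      _ = _ := by ring
  refine (norm_sum_le_of_le _ h1).trans ?_
  rw [← Finset.mul_sum, Finset.sum_add_distrib, Finset.sum_const, nsmul_eq_mul]
  calc _ ≤ t * C * (θ * s + s * θ) := by gcongr; exact hn g₁
    _ = (2 * θ * C) * (s * t) := by ring
    _ ≤ _ := by gcongr

lemma full (hS : Sys ω τ ι) {S T : ℕ → Finset G} (hF : Fol S) (hT : Fol T) (a b c d : A)
    (η : ℝ) (hη : 0 < η) : ∀ᶠ n in atTop, ∀ g₁ g₂,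
      ‖∑ h ∈ S n, ∑ g ∈ T n,
        ω (τ (g * g₂ * (h * g₁)) a * τ (g * g₂) b * τ (h * g₁) c * d)
          - (S n).card * (T n).card * (ω a * ω b * ω c * ω d)‖
        ≤ η * ((S n).card * (T n).card) := by
  have z0 : ∀ x, ω (x - algebraMap ℂ A (ω x)) = 0 := fun x => by
    rw [Algebra.algebraMap_eq_smul_one, map_sub, map_smul, hS.one]; simp
  obtain ⟨C, hC0, hC⟩ := mulbd hS c d
  have hna := norm_nonneg (ω a)
  have hnb := norm_nonneg (ω b)
  set θ := η / (3 * (‖ω a‖ * C + 1)) with hθ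
  have hθ0 : 0 < θ := by positivity
  set κ := η / (3 * (‖ω a‖ * ‖ω b‖ + 1)) with hκ
  have hκ0 : 0 < κ := by positivity
  filter_upwards [vdc hS hF hT (a - algebraMap ℂ A (ω a)) b c d (z0 a) (η / 3) (by positivity),
    erg hS hT (b - algebraMap ℂ A (ω b)) (z0 b) θ hθ0, erg2 hS hF d c κ hκ0] with n h1 h2 h3 g₁ g₂
  specialize h1 g₁ g₂
  specialize h2 g₂
  specialize h3 g₁
  set s : ℝ := ((S n).card : ℝ) with hs
  set t : ℝ := ((T n).card : ℝ) with ht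
  have hs0 : 0 ≤ s := Nat.cast_nonneg _
  have ht0 : 0 ≤ t := Nat.cast_nonneg _
  have hθC : ‖ω a‖ * (θ * C) ≤ η / 3 := by
    have : ‖ω a‖ * (θ * C) = η * (‖ω a‖ * C) / (3 * (‖ω a‖ * C + 1)) := by
      rw [hθ]; field_simp
    rw [this, div_le_iff₀ (by positivity)]; nlinarith
  have hκC : ‖ω a‖ * ‖ω b‖ * κ ≤ η / 3 := by
    have : ‖ω a‖ * ‖ω b‖ * κ = η * (‖ω a‖ * ‖ω b‖) / (3 * (‖ω a‖ * ‖ω b‖ + 1)) := by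
      rw [hκ]; field_simp
    rw [this, div_le_iff₀ (by positivity)]; nlinarith [mul_nonneg hna hnb]
  set X := ∑ h ∈ S n, ∑ g ∈ T n, ω (τ (g * g₂ * (h * g₁)) (a - algebraMap ℂ A (ω a)) *
    τ (g * g₂) b * τ (h * g₁) c * d) with hX
  set Y := ∑ h ∈ S n, ω ((∑ g ∈ T n, τ (g * g₂) (b - algebraMap ℂ A (ω b))) *
    (τ (h * g₁) c * d)) with hY
  set Z := ∑ h ∈ S n, ω (d * τ (h * g₁) c) - ((S n).card : ℂ) * (ω d * ω c) with hZ
  have e : ∑ h ∈ S n, ∑ g ∈ T n,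
        ω (τ (g * g₂ * (h * g₁)) a * τ (g * g₂) b * τ (h * g₁) c * d)
          - (S n).card * (T n).card * (ω a * ω b * ω c * ω d) =
      X + ω a * Y + ω a * ω b * (T n).card * Z := by
    have t1 : ∀ g h, ω (τ (g * g₂ * (h * g₁)) a * τ (g * g₂) b * τ (h * g₁) c * d) =
        ω (τ (g * g₂ * (h * g₁)) (a - algebraMap ℂ A (ω a)) *
          τ (g * g₂) b * τ (h * g₁) c * d) + ω a * (ω (τ (g * g₂) (b - algebraMap ℂ A (ω b)) *
          (τ (h * g₁) c * d)) + ω b * ω (d * τ (h * g₁) c)) := fun g h => by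
      rw [hS.tr d]
      simp only [map_sub, Algebra.algebraMap_eq_smul_one, map_smul, map_one, sub_mul,
        smul_mul_assoc, one_mul, smul_eq_mul, mul_assoc]
      ring
    simp only [t1, Finset.sum_add_distrib, ← Finset.mul_sum, Finset.sum_const, nsmul_eq_mul]
    rw [← hX, hY, hZ]
    simp only [Finset.sum_mul, map_sum]
    ring
  have hYb : ‖Y‖ ≤ s * (θ * t * C) := by
    have := norm_sum_le_of_le (S n) (n := fun _ => θ * t * C) (f := fun h =>
      ω ((∑ g ∈ T n, τ (g * g₂) (b - algebraMap ℂ A (ω b))) * (τ (h * g₁) c * d)))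
      (fun h _ => (cs hS _ _).trans
        (mul_le_mul h2 (hC _) (norm_nonneg _) (by positivity)))
    rw [Finset.sum_const, nsmul_eq_mul] at this
    exact this
  rw [e]
  calc _ ≤ ‖X‖ + ‖ω a * Y‖ + ‖ω a * ω b * (T n).card * Z‖ := norm_add₃_le
    _ = ‖X‖ + ‖ω a‖ * ‖Y‖ + ‖ω a‖ * ‖ω b‖ * t * ‖Z‖ := by simp [ht]
    _ ≤ η / 3 * (s * t) + ‖ω a‖ * (s * (θ * t * C)) + ‖ω a‖ * ‖ω b‖ * t * (κ * s) := by
        gcongr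
    _ = η / 3 * (s * t) + (‖ω a‖ * (θ * C)) * (s * t) + (‖ω a‖ * ‖ω b‖ * κ) * (s * t) := by ring
    _ ≤ η / 3 * (s * t) + η / 3 * (s * t) + η / 3 * (s * t) := by gcongr
    _ = _ := by ring

lemma final (hS : Sys ω τ ι) {S T : ℕ → Finset G} (hF : Fol S) (hT : Fol T) (a b c d : A)
    (ε : ℝ) (hε : 0 < ε) : ∀ᶠ n in atTop, ∀ g₁ g₂, ∃ g ∈ T n, ∃ h ∈ S n,
      ‖ω (τ (g * g₂ * (h * g₁)) a * τ (g * g₂) b * τ (h * g₁) c * d)‖ >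
        ‖ω a * ω b * ω c * ω d‖ - ε := by
  filter_upwards [full hS hF hT a b c d (ε / 2) (by positivity), hF.1, hT.1] with n hn h1 h2 g₁ g₂
  by_contra! hcon
  have hs : (0 : ℝ) < (S n).card := by exact_mod_cast h1.card_pos
  have ht : (0 : ℝ) < (T n).card := by exact_mod_cast h2.card_pos
  have e1 := norm_sum_le_of_le (S n) fun h hh => norm_sum_le_of_le (T n) fun g hg => hcon g hg h hh
  simp only [Finset.sum_const, nsmul_eq_mul] at e1
  have e2 := norm_le_norm_add_norm_sub ((∑ h ∈ S n, ∑ g ∈ T n,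
        ω (τ (g * g₂ * (h * g₁)) a * τ (g * g₂) b * τ (h * g₁) c * d)))
          ((S n).card * (T n).card * (ω a * ω b * ω c * ω d))
  have e3 := hn g₁ g₂
  have e4 : ‖((S n).card : ℂ) * (T n).card * (ω a * ω b * ω c * ω d)‖ =
      (S n).card * (T n).card * ‖ω a * ω b * ω c * ω d‖ := by
    rw [norm_mul, norm_mul, Complex.norm_natCast, Complex.norm_natCast]
  have := mul_pos hs ht
  rw [e4] at e2
  nlinarith
end

lemma setInt {G : Type v} [MeasurableSpace G] (S : Set G) (hS : MeasurableSet S) (hf : S.Finite)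
    (f : G → ℝ) (hm : Measurable f) (h0 : ∀ g, 0 ≤ f g) :
    ∫ g in S, f g ∂Measure.count = ∑ g ∈ hf.toFinset, f g := by
  rw [integral_eq_lintegral_of_nonneg_ae (Eventually.of_forall h0)
    hm.stronglyMeasurable.aestronglyMeasurable, ← lintegral_indicator hS,
    lintegral_count' (hm.ennreal_ofReal.indicator hS),
    tsum_eq_sum (s := hf.toFinset) (fun b hb => by simpa using fun h => absurd h (by simpa using hb)),
    ENNReal.toReal_sum (fun g hg => by
      rw [Set.indicator_of_mem (by simpa using hg)]; exact ENNReal.ofReal_ne_top)]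
  refine Finset.sum_congr rfl fun g hg => ?_
  rw [Set.indicator_of_mem (by simpa using hg), ENNReal.toReal_ofReal (h0 g)]

lemma count_real {G : Type v} [MeasurableSpace G] (S : Set G) (hS : MeasurableSet S) (hf : S.Finite) :
    (Measure.count S).toReal = hf.toFinset.card := by
  rw [Measure.count_apply_finite' hf hS]; simp

open Classical in
/-- finite part -/
noncomputable def fin {G : Type v} (Λ : ℕ → Set G) (n : ℕ) : Finset G :=
  if h : (Λ n).Finite then h.toFinset else ∅

lemma mem_fin {G : Type v} {Λ : ℕ → Set G} {n : ℕ} {g : G} (h : g ∈ fin Λ n) : g ∈ Λ n := by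
  unfold fin at h
  split_ifs at h with h'
  · simpa using h
  · simp at h

lemma toFol {G : Type v} [CommGroup G] [TopologicalSpace G] [IsTopologicalGroup G]
    [MeasurableSpace G] [BorelSpace G] (Λ : ℕ → Set G)
    (hmeas : ∀ n, MeasurableSet (Λ n))
    (hfin : ∀ᶠ n in atTop, 0 < Measure.count (Λ n) ∧ Measure.count (Λ n) < ⊤)
    (hfol : ∀ g : G, Tendsto
      (fun n => (Measure.count (symmDiff (Λ n) (Λ n * {g}))).toReal / (Measure.count (Λ n)).toReal)
      atTop (𝓝 0)) : Fol (fin Λ) := by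
  classical
  have h1 : ∀ᶠ n in atTop, (Λ n).Nonempty ∧ (Λ n).Finite := by
    filter_upwards [hfin] with n hn
    exact ⟨Measure.count_ne_zero_iff.1 hn.1.ne', (Measure.count_apply_lt_top' (hmeas n)).1 hn.2⟩
  refine ⟨?_, fun k δ hδ => ?_⟩
  · filter_upwards [h1] with n hn
    simp only [fin, dif_pos hn.2]
    simpa using hn.1
  · filter_upwards [h1, (hfol k).eventually_lt_const hδ] with n hn hlt
    have ei : Λ n * {k} = (· * k) '' Λ n := Set.mul_singleton
    have em : MeasurableSet (Λ n * {k}) := by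
      rw [ei, Set.image_mul_right]
      exact (measurable_mul_const _) (hmeas n)
    have ef : (symmDiff (Λ n) (Λ n * {k})).Finite := by
      refine (hn.2.union (ei ▸ hn.2.image _)).subset Set.symmDiff_subset_union
    rw [count_real _ ((hmeas n).symmDiff em) ef, count_real _ (hmeas n) hn.2] at hlt
    have hp : (0 : ℝ) < hn.2.toFinset.card := by
      have : hn.2.toFinset.Nonempty := by simpa using hn.1
      exact_mod_cast this.card_pos
    rw [div_lt_iff₀ hp] at hlt
    simp only [fin, dif_pos hn.2]
    have : symmDiff hn.2.toFinset (hn.2.toFinset.image (· * k)) = ef.toFinset := by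
      ext x
      simp [Finset.mem_symmDiff, Set.mem_symmDiff]
    rw [this]
    exact hlt.le

lemma toWM {A : Type u} [Ring A] [StarRing A] [Algebra ℂ A] [StarModule ℂ A]
    {G : Type v} [CommGroup G] [MeasurableSpace G]
    (ω : A →ₗ[ℂ] ℂ) (τ : G → A ≃⋆ₐ[ℂ] A)
    (hτ_meas : ∀ a b : A, Measurable fun g : G => ω (a * τ g b))
    (hWM : ∃ Λ : ℕ → Set G, (∀ n, MeasurableSet (Λ n)) ∧
      (∀ᶠ n in atTop, 0 < Measure.count (Λ n) ∧ Measure.count (Λ n) < ⊤) ∧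
      ∀ a b : A, Tendsto
        (fun n => (Measure.count (Λ n)).toReal⁻¹ * ∫ g in Λ n, ‖ω (a * τ g b) - ω a * ω b‖ ∂Measure.count)
        atTop (𝓝 0)) (a : A) (ha : ω a = 0) (δ : ℝ) (hδ : 0 < δ) (s : Finset G) :
    ∃ y, ∀ x ∈ s, ‖ω (star (τ x a) * τ y a)‖ ≤ δ := by
  obtain ⟨Λ, hmeas, hfin, hw⟩ := hWM
  have hθ : 0 < δ / (s.card + 1) := by positivity
  have hev : ∀ᶠ n in atTop, ∀ x ∈ s, (Measure.count (Λ n)).toReal⁻¹ *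
      ∫ g in Λ n, ‖ω (star (τ x a) * τ g a) - ω (star (τ x a)) * ω a‖ ∂Measure.count
        < δ / (s.card + 1) :=
    (Filter.eventually_all_finset _).2 fun x _ => (hw _ _).eventually_lt_const hθ
  obtain ⟨n, hn, hn2⟩ := (hev.and hfin).exists
  have hne := Measure.count_ne_zero_iff.1 hn2.1.ne'
  have hf := (Measure.count_apply_lt_top' (hmeas n)).1 hn2.2
  have hp : (0 : ℝ) < hf.toFinset.card := by
    have : hf.toFinset.Nonempty := by simpa using hne
    exact_mod_cast this.card_pos
  by_contra! hcon
  have h1 : ∀ x ∈ s, ∑ g ∈ hf.toFinset, ‖ω (star (τ x a) * τ g a)‖ ≤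
      hf.toFinset.card * (δ / (s.card + 1)) := fun x hx => by
    have := hn x hx
    simp only [ha, mul_zero, sub_zero] at this
    rw [setInt _ (hmeas n) hf _ (hτ_meas _ _).norm (fun _ => norm_nonneg _),
      count_real _ (hmeas n) hf, inv_mul_lt_iff₀ hp] at this
    exact this.le
  have h2 := Finset.sum_le_sum h1
  rw [Finset.sum_comm, Finset.sum_const, nsmul_eq_mul] at h2
  have h3 : ∑ g ∈ hf.toFinset, δ ≤ ∑ g ∈ hf.toFinset, ∑ x ∈ s, ‖ω (star (τ x a) * τ g a)‖ := by
    refine Finset.sum_le_sum fun g _ => ?_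
    obtain ⟨x, hx, hlt⟩ := hcon g
    exact hlt.le.trans (Finset.single_le_sum (f := fun x => ‖ω (star (τ x a) * τ g a)‖)
      (fun _ _ => norm_nonneg _) hx)
  rw [Finset.sum_const, nsmul_eq_mul] at h3
  have h4 : (s.card : ℝ) * (hf.toFinset.card * (δ / (s.card + 1))) < hf.toFinset.card * δ := by
    have : (s.card : ℝ) * (hf.toFinset.card * (δ / (s.card + 1))) =
      hf.toFinset.card * δ * s.card / (s.card + 1) := by ring
    rw [this, div_lt_iff₀ (by positivity)]
    nlinarith [mul_pos hp hδ]
  linarith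

end RecAux

/-- **Corollary 5.7(2): relatively dense recurrence** (counting measure case). -/
theorem recurrence_relatively_dense
    -- a unital C*-algebra A
    {A : Type*} [NormedRing A] [StarRing A] [CStarRing A] [NormedAlgebra ℂ A]
    [CompleteSpace A] [StarModule ℂ A]
    -- a tracial state ω on A
    (ω : A →ₗ[ℂ] ℂ) (hω_pos : ∀ a : A, 0 ≤ ω (star a * a)) (hω_one : ω 1 = 1)
    (hω_tracial : ∀ a b : A, ω (a * b) = ω (b * a))
    -- a countable second countable topological abelian group G with the counting measure
    -- on its Borel σ-algebra
    {G : Type*} [CommGroup G] [Countable G] [TopologicalSpace G] [IsTopologicalGroup G]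
    [SecondCountableTopology G] [MeasurableSpace G] [BorelSpace G]
    -- the action τ, making (A, ω, τ, G) a C*-dynamical system
    (τ : G → A ≃⋆ₐ[ℂ] A)
    (hτ_one : ∀ a : A, τ 1 a = a)
    (hτ_mul : ∀ g h a, τ g (τ h a) = τ (g * h) a)
    (hω_inv : ∀ g a, ω (τ g a) = ω a)
    (hτ_meas : ∀ a b : A, Measurable fun g : G => ω (a * τ g b))
    -- the system is weakly mixing (w.r.t. some, equivalently every, Følner sequence in G)
    (hWM : ∃ Λ : ℕ → Set G, (∀ n, MeasurableSet (Λ n)) ∧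
      (∀ᶠ n in atTop, 0 < Measure.count (Λ n) ∧ Measure.count (Λ n) < ⊤) ∧
      (∀ g : G, Tendsto
        (fun n => (Measure.count (symmDiff (Λ n) (Λ n * {g}))).toReal / (Measure.count (Λ n)).toReal)
        atTop (𝓝 0)) ∧
      ∀ a b : A, Tendsto
        (fun n => (Measure.count (Λ n)).toReal⁻¹ * ∫ g in Λ n, ‖ω (a * τ g b) - ω a * ω b‖ ∂Measure.count)
        atTop (𝓝 0))
    -- (g,h,j,k) ↦ ω(τ_h(a₁) τ_g(a₂) τ_{gh}(a₃) τ_{jk}(a₄) τ_j(a₅) τ_k(a₆)) is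
    -- Σ² × Σ²-measurable
    (hmeas6 : ∀ a₁ a₂ a₃ a₄ a₅ a₆ : A, Measurable fun q : (G × G) × (G × G) =>
      ω (τ q.1.2 a₁ * τ q.1.1 a₂ * τ (q.1.1 * q.1.2) a₃ *
        τ (q.2.1 * q.2.2) a₄ * τ q.2.1 a₅ * τ q.2.2 a₆))
    -- a uniform Følner sequence (Λ1 n) in G ...
    (Λ1 : ℕ → Set G)
    (hΛ1meas : ∀ n, MeasurableSet (Λ1 n))
    (hΛ1fin : ∀ᶠ n in atTop, 0 < Measure.count (Λ1 n) ∧ Measure.count (Λ1 n) < ⊤)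
    (hΛ1folner : ∀ g : G, Tendsto
      (fun n => (Measure.count (symmDiff (Λ1 n) (Λ1 n * {g}))).toReal / (Measure.count (Λ1 n)).toReal)
      atTop (𝓝 0))
    (hΛ1unif : ∀ᶠ m in atTop, ∀ ε > (0 : ℝ), ∀ᶠ n in atTop, ∀ g ∈ Λ1 m,
      (Measure.count (symmDiff (Λ1 n) (Λ1 n * {g}))).toReal ≤ ε * (Measure.count (Λ1 n)).toReal)
    -- ... satisfying the Tempel'man condition ...
    (hΛ1temp : ∃ c : ℝ, 0 < c ∧ ∀ᶠ n in atTop, MeasurableSet ((Λ1 n)⁻¹ * Λ1 n) ∧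
      Measure.count ((Λ1 n)⁻¹ * Λ1 n) ≤ ENNReal.ofReal c * Measure.count (Λ1 n))
    -- ... and such that (Λ1 n⁻¹ Λ1 n) is also Følner in G
    (hΛ1invfin : ∀ᶠ n in atTop, 0 < Measure.count ((Λ1 n)⁻¹ * Λ1 n) ∧ Measure.count ((Λ1 n)⁻¹ * Λ1 n) < ⊤)
    (hΛ1invfolner : ∀ g : G, Tendsto
      (fun n => (Measure.count (symmDiff ((Λ1 n)⁻¹ * Λ1 n) (((Λ1 n)⁻¹ * Λ1 n) * {g}))).toReal /
        (Measure.count ((Λ1 n)⁻¹ * Λ1 n)).toReal)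
      atTop (𝓝 0))
    -- a uniform Følner sequence (Λ2 n) in G ...
    (Λ2 : ℕ → Set G)
    (hΛ2meas : ∀ n, MeasurableSet (Λ2 n))
    (hΛ2fin : ∀ᶠ n in atTop, 0 < Measure.count (Λ2 n) ∧ Measure.count (Λ2 n) < ⊤)
    (hΛ2folner : ∀ g : G, Tendsto
      (fun n => (Measure.count (symmDiff (Λ2 n) (Λ2 n * {g}))).toReal / (Measure.count (Λ2 n)).toReal)
      atTop (𝓝 0))
    (hΛ2unif : ∀ᶠ m in atTop, ∀ ε > (0 : ℝ), ∀ᶠ n in atTop, ∀ g ∈ Λ2 m,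
      (Measure.count (symmDiff (Λ2 n) (Λ2 n * {g}))).toReal ≤ ε * (Measure.count (Λ2 n)).toReal)
    -- ... satisfying the Tempel'man condition ...
    (hΛ2temp : ∃ c : ℝ, 0 < c ∧ ∀ᶠ n in atTop, MeasurableSet ((Λ2 n)⁻¹ * Λ2 n) ∧
      Measure.count ((Λ2 n)⁻¹ * Λ2 n) ≤ ENNReal.ofReal c * Measure.count (Λ2 n))
    -- ... and such that (Λ2 n⁻¹ Λ2 n) is also Følner in G
    (hΛ2invfin : ∀ᶠ n in atTop, 0 < Measure.count ((Λ2 n)⁻¹ * Λ2 n) ∧ Measure.count ((Λ2 n)⁻¹ * Λ2 n) < ⊤)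
    (hΛ2invfolner : ∀ g : G, Tendsto
      (fun n => (Measure.count (symmDiff ((Λ2 n)⁻¹ * Λ2 n) (((Λ2 n)⁻¹ * Λ2 n) * {g}))).toReal /
        (Measure.count ((Λ2 n)⁻¹ * Λ2 n)).toReal)
      atTop (𝓝 0))
    -- the system is uniformly asymptotically abelian with respect to (Λ1 n) (ε-form)
    (hcomm_meas : ∀ a b : A, Measurable fun g : G => ‖a * τ g b - τ g b * a‖)
    (hUAA : ∀ a b : A, ∀ ε > (0 : ℝ), ∀ᶠ n in atTop, ∀ h : G,
      (Measure.count (Λ1 n)).toReal⁻¹ * ∫ g in Λ1 n * {h}, ‖a * τ g b - τ g b * a‖ ∂Measure.count ≤ ε)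
 :
    -- conclusion: recurrence in every right translate of Λ2 n × Λ1 n, hence the set E of
    -- good pairs is relatively dense in G × G
    ∀ ε > (0 : ℝ), ∀ a b c d : A, ∃ n : ℕ,
      (∀ g₁ g₂ : G, ∃ g ∈ Λ2 n * {g₂}, ∃ h ∈ Λ1 n * {g₁},
        ‖ω (τ (g * h) a * τ g b * τ h c * d)‖ > ‖ω a * ω b * ω c * ω d‖ - ε) ∧
      ∃ F : Set (G × G), F.Finite ∧
        F * {q : G × G | ‖ω (τ (q.1 * q.2) a * τ q.1 b * τ q.2 c * d)‖ >
          ‖ω a * ω b * ω c * ω d‖ - ε} = Set.univ := by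
  intro ε hε a b c d
  obtain ⟨H, _, _, ι, hι⟩ := RecAux.gns ω hω_pos
  have hS : RecAux.Sys ω τ ι :=
    { one := hω_one
      tr := hω_tracial
      mul := hτ_mul
      inv := hω_inv
      inn := hι
      wm := RecAux.toWM ω τ hτ_meas (by
        obtain ⟨Λ, h1, h2, -, h3⟩ := hWM
        exact ⟨Λ, h1, h2, h3⟩) }
  have hF1 := RecAux.toFol Λ1 hΛ1meas hΛ1fin hΛ1folner
  have hF2 := RecAux.toFol Λ2 hΛ2meas hΛ2fin hΛ2folner
  obtain ⟨n, hn⟩ := (RecAux.final hS hF1 hF2 a b c d ε hε).exists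
  refine ⟨n, fun g₁ g₂ => ?_, ((RecAux.fin Λ2 n ×ˢ RecAux.fin Λ1 n : Finset (G × G)) : Set (G × G))⁻¹,
    (Finset.finite_toSet _).inv, ?_⟩
  · obtain ⟨g, hg, h, hh, hlt⟩ := hn g₁ g₂
    exact ⟨g * g₂, Set.mul_mem_mul (RecAux.mem_fin hg) rfl, h * g₁,
      Set.mul_mem_mul (RecAux.mem_fin hh) rfl, hlt⟩
  · rw [Set.eq_univ_iff_forall]
    rintro ⟨p, q⟩
    obtain ⟨g, hg, h, hh, hlt⟩ := hn q p
    refine Set.mem_mul.2 ⟨(g, h)⁻¹, ?_, (g * p, h * q), hlt, ?_⟩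
    · simp [hg, hh]
    · simp
end
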